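/- arXiv:0904.0535 — 3 statements merged into one kernel-verified Lean document; each statement's English description precedes it below -/
import Mathlib

section
/- Let L be a (1,1)-tensor field with N_L = 0 and let χ = χ1·χ2 be an admissible factorisation of its characteristic polynomial, with deg χ1 = r. Then around every point there exists a local coordinate system (x¹,…,x^r, y^{r+1},…,y^n) such that ∂_{x^1},…,∂_{x^r} generate D1 = ker χ1(L), ∂_{y^{r+1}},…,∂_{y^n} generate D2 = ker χ2(L), and L has the block-diagonal form L(x,y) = diag(L1(x), L2(y)), where the entries of L1 depend only on x and the entries of L2 depend only on y. In particular, the distributions D1 and D2 are integrable. -/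
open Matrix Polynomial Filter

noncomputable section

variable {ι : Type} [Fintype ι] [DecidableEq ι]

/-- Partial derivative of a real-valued function on `ι → ℝ` in the direction of the
`j`-th coordinate vector. -/
def pd (j : ι) (F : (ι → ℝ) → ℝ) (x : ι → ℝ) : ℝ :=
  fderiv ℝ F x (Pi.single j 1)

/-- Christoffel symbols `Γ^i_{jk}` of a metric given in local coordinates as a
matrix-valued function. -/
def christoffel (g : (ι → ℝ) → Matrix ι ι ℝ) (x : ι → ℝ) (i j k : ι) : ℝ :=
  (1 / 2) * ∑ m, (g x)⁻¹ i m *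
    (pd j (fun y => g y m k) x + pd k (fun y => g y m j) x - pd m (fun y => g y j k) x)

/-- A curve is a geodesic of `g` up to reparametrisation (an unparametrized geodesic):
`γ̈ + Γ(γ̇,γ̇) = α(t)·γ̇` for some function `α`. -/
def IsPregeodesic (g : (ι → ℝ) → Matrix ι ι ℝ) (γ : ℝ → ι → ℝ) : Prop :=
  ∃ α : ℝ → ℝ, ∀ t : ℝ, ∀ i : ι,
    deriv (fun s => deriv (fun τ => γ τ i) s) t
      + ∑ j, ∑ k, christoffel g (γ t) i j k *
          deriv (fun τ => γ τ j) t * deriv (fun τ => γ τ k) t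
      = α t * deriv (fun τ => γ τ i) t

/-- `g` is a pseudo-Riemannian metric (in local coordinates) on the set `U`. -/
structure IsMetricOn (g : (ι → ℝ) → Matrix ι ι ℝ) (U : Set (ι → ℝ)) : Prop where
  smooth : ∀ i j, ContDiffOn ℝ (⊤ : ℕ∞) (fun x => g x i j) U
  symm : ∀ x ∈ U, (g x)ᵀ = g x
  nondeg : ∀ x ∈ U, IsUnit (g x).det

/-- Two metrics are geodesically equivalent on `U`: they have the same geodesics
considered as unparametrized curves. -/
def GeodEquiv (g gb : (ι → ℝ) → Matrix ι ι ℝ) (U : Set (ι → ℝ)) : Prop :=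
  ∀ γ : ℝ → ι → ℝ, ContDiff ℝ (⊤ : ℕ∞) γ → (∀ t, γ t ∈ U) →
    (IsPregeodesic g γ ↔ IsPregeodesic gb γ)

/-- The (1,1)-tensor `L(g,ḡ)^i_j = (det ḡ / det g)^{1/(n+1)} ḡ^{ik} g_{kj}`. -/
def Lten (g gb : (ι → ℝ) → Matrix ι ι ℝ) (x : ι → ℝ) : Matrix ι ι ℝ :=
  (((gb x).det / (g x).det) ^ ((1 : ℝ) / (Fintype.card ι + 1))) • ((gb x)⁻¹ * g x)

/-- An admissible factorisation `χ = χ₁·χ₂` of the characteristic polynomial of `L`: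
both factors are monic of degree ≥ 1, have smooth coefficients, and have no common
complex root at any point of `U`. -/
structure AdmissibleFact (L : (ι → ℝ) → Matrix ι ι ℝ) (U : Set (ι → ℝ))
    (chi1 chi2 : (ι → ℝ) → Polynomial ℝ) : Prop where
  factor : ∀ x ∈ U, (L x).charpoly = chi1 x * chi2 x
  monic1 : ∀ x ∈ U, (chi1 x).Monic
  monic2 : ∀ x ∈ U, (chi2 x).Monic
  deg1 : ∀ x ∈ U, 1 ≤ (chi1 x).natDegree
  deg2 : ∀ x ∈ U, 1 ≤ (chi2 x).natDegree
  smooth1 : ∀ k, ContDiffOn ℝ (⊤ : ℕ∞) (fun x => (chi1 x).coeff k) U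
  smooth2 : ∀ k, ContDiffOn ℝ (⊤ : ℕ∞) (fun x => (chi2 x).coeff k) U
  coprime : ∀ x ∈ U, ¬ ∃ z : ℂ, aeval z (chi1 x) = 0 ∧ aeval z (chi2 x) = 0

/-- The distribution `D = ker χ(L)`. -/
def Dker (L : (ι → ℝ) → Matrix ι ι ℝ) (chi : (ι → ℝ) → Polynomial ℝ) (x : ι → ℝ) :
    Submodule ℝ (ι → ℝ) :=
  LinearMap.ker (Matrix.mulVecLin (aeval (L x) (chi x)))

/-- A distribution on `U` is integrable (involutive, which is equivalent by the
Frobenius theorem): the Lie bracket of any two smooth vector fields tangent to the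
distribution is again tangent to it. -/
def IsIntegrableDist (U : Set (ι → ℝ)) (D : (ι → ℝ) → Submodule ℝ (ι → ℝ)) : Prop :=
  ∀ u v : (ι → ℝ) → ι → ℝ, ContDiffOn ℝ (⊤ : ℕ∞) u U → ContDiffOn ℝ (⊤ : ℕ∞) v U →
    (∀ x ∈ U, u x ∈ D x) → (∀ x ∈ U, v x ∈ D x) →
    ∀ x ∈ U, (fderiv ℝ v x (u x) - fderiv ℝ u x (v x)) ∈ D x

/-- The Lie bracket of two vector fields on `ι → ℝ`. -/
def vbracket (u v : (ι → ℝ) → ι → ℝ) (x : ι → ℝ) : ι → ℝ :=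
  fderiv ℝ v x (u x) - fderiv ℝ u x (v x)

/-- The vector field `Lu : x ↦ L(x)(u(x))`. -/
def appT (L : (ι → ℝ) → Matrix ι ι ℝ) (u : (ι → ℝ) → ι → ℝ) : (ι → ℝ) → ι → ℝ :=
  fun x => (L x).mulVec (u x)

/-- The Nijenhuis torsion `N_L(u,v) = L²[u,v] − L[Lu,v] − L[u,Lv] + [Lu,Lv]`. -/
def nijenhuis (L : (ι → ℝ) → Matrix ι ι ℝ) (u v : (ι → ℝ) → ι → ℝ)
    (x : ι → ℝ) : ι → ℝ :=
  (L x).mulVec ((L x).mulVec (vbracket u v x))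
  - (L x).mulVec (vbracket (appT L u) v x)
  - (L x).mulVec (vbracket u (appT L v) x)
  + vbracket (appT L u) (appT L v) x

/-- `N_L = 0` on `U`, tested against all smooth vector fields. -/
def NijenhuisZero (L : (ι → ℝ) → Matrix ι ι ℝ) (U : Set (ι → ℝ)) : Prop :=
  ∀ u v : (ι → ℝ) → ι → ℝ, ContDiff ℝ (⊤ : ℕ∞) u → ContDiff ℝ (⊤ : ℕ∞) v →
    ∀ x ∈ U, nijenhuis L u v x = 0

/-- The span of the first `r` coordinate vector fields. -/
def coordSpan (n r : ℕ) : Submodule ℝ (Fin n → ℝ) :=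
  Submodule.span ℝ {e : Fin n → ℝ | ∃ i : Fin n, (i : ℕ) < r ∧ e = Pi.single i 1}

/-- The span of the last `n - r` coordinate vector fields. -/
def coordSpan' (n r : ℕ) : Submodule ℝ (Fin n → ℝ) :=
  Submodule.span ℝ {e : Fin n → ℝ | ∃ i : Fin n, r ≤ (i : ℕ) ∧ e = Pi.single i 1}

/-- The Jacobian matrix of a map `Φ : ℝⁿ → ℝⁿ`. -/
def jac {ι : Type} [Fintype ι] [DecidableEq ι] (Φ : (ι → ℝ) → ι → ℝ) (x : ι → ℝ) :
    Matrix ι ι ℝ :=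
  Matrix.of fun i j => pd j (fun y => Φ y i) x

section LocalSplitting

open scoped Topology ContDiff

section CurveSpace

variable {K E F : Type} [TopologicalSpace K] [CompactSpace K]
  [NormedAddCommGroup E] [NormedSpace ℝ E] [NormedAddCommGroup F] [NormedSpace ℝ F]

/-- Pointwise application of a continuous family of operators to a continuous function,
as a continuous bilinear map. -/
def pointwiseApply : C(K, E →L[ℝ] F) →L[ℝ] C(K, E) →L[ℝ] C(K, F) :=
  LinearMap.mkContinuous₂
    (LinearMap.mk₂ ℝ (fun (T : C(K, E →L[ℝ] F)) (z : C(K, E)) => (⟨fun t => T t (z t), by fun_prop⟩ : C(K, F)))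
      (by intros; ext; simp) (by intros; ext; simp) (by intros; ext; simp)
      (by intros; ext; simp)) 1 (by
    intro T z
    rw [ContinuousMap.norm_le _ (by positivity)]
    intro t
    simp only [LinearMap.mk₂_apply, ContinuousMap.coe_mk, one_mul]
    exact (T t).le_of_opNorm_le_of_le (T.norm_coe_le_norm t) (z.norm_coe_le_norm t))

@[simp]
theorem pointwiseApply_apply (T : C(K, E →L[ℝ] F)) (z : C(K, E)) (t : K) :
    pointwiseApply T z t = T t (z t) := rfl

theorem hasFDerivAt_postcomp {f : E → F} (hf : ContDiff ℝ 1 f) (z : C(K, E)) :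
    HasFDerivAt (fun w : C(K, E) => (⟨f, hf.continuous⟩ : C(E, F)).comp w)
      (pointwiseApply
        ((⟨fderiv ℝ f, hf.continuous_fderiv one_ne_zero⟩ : C(E, E →L[ℝ] F)).comp z)) z := by
  set f' : C(E, E →L[ℝ] F) := ⟨fderiv ℝ f, hf.continuous_fderiv one_ne_zero⟩ with hf'
  rw [hasFDerivAt_iff_isLittleO_nhds_zero, Asymptotics.isLittleO_iff]
  intro c hc
  have hcont : Continuous fun w : C(K, E) => f'.comp w := ContinuousMap.continuous_postcomp f'
  obtain ⟨δ, hδ, hball⟩ := (Metric.continuous_iff (β := C(K, E →L[ℝ] F))).1 hcont z c hc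
  filter_upwards [Metric.ball_mem_nhds (0 : C(K, E)) hδ] with h hh
  rw [ContinuousMap.norm_le _ (by positivity)]
  intro t
  have key : ∀ ξ ∈ segment ℝ (z t) (z t + h t),
      ‖fderiv ℝ f ξ - fderiv ℝ f (z t)‖ ≤ c := by
    intro ξ hξ
    rw [segment_eq_image'] at hξ
    obtain ⟨θ, hθ, rfl⟩ := hξ
    have hd : dist (z + θ • h) z < δ := by
      rw [dist_eq_norm, add_sub_cancel_left, norm_smul, Real.norm_eq_abs, abs_of_nonneg hθ.1]
      have : ‖h‖ < δ := by simpa using hh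
      nlinarith [norm_nonneg h, hθ.2]
    have h1 := (ContinuousMap.norm_coe_le_norm (f'.comp (z + θ • h) - f'.comp z) t)
    rw [← dist_eq_norm] at h1
    have h2 := h1.trans (hball _ hd).le
    simpa [hf'] using h2
  have hmv := (convex_segment (z t) (z t + h t)).norm_image_sub_le_of_norm_hasFDerivWithin_le'
    (f := f) (f' := fun ξ => fderiv ℝ f ξ) (φ := fderiv ℝ f (z t)) (C := c)
    (fun ξ _ => ((hf.differentiable one_ne_zero) ξ).hasFDerivAt.hasFDerivWithinAt) key
    (left_mem_segment ℝ _ _) (right_mem_segment ℝ _ _)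
  rw [add_sub_cancel_left] at hmv
  calc _ = ‖f (z t + h t) - f (z t) - fderiv ℝ f (z t) (h t)‖ := by simp [hf']
    _ ≤ c * ‖h t‖ := hmv
    _ ≤ c * ‖h‖ := by gcongr; exact h.norm_coe_le_norm t

end CurveSpace

theorem contDiff_postcomp_nat {K E : Type} [TopologicalSpace K] [CompactSpace K]
    [NormedAddCommGroup E] [NormedSpace ℝ E] (n : ℕ) :
    ∀ {F : Type} [NormedAddCommGroup F] [NormedSpace ℝ F] {f : E → F} (hf : ContDiff ℝ ∞ f),
      ContDiff ℝ n (fun w : C(K, E) => (⟨f, hf.continuous⟩ : C(E, F)).comp w) := by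
  induction n with
  | zero =>
    intro F _ _ f hf
    simpa [contDiff_zero] using ContinuousMap.continuous_postcomp (⟨f, hf.continuous⟩ : C(E, F))
  | succ n ih =>
    intro F _ _ f hf
    push_cast
    rw [contDiff_succ_iff_hasFDerivAt]
    have hf1 : ContDiff ℝ 1 f := hf.of_le (by exact_mod_cast le_top)
    refine ⟨_, ?_, fun z => hasFDerivAt_postcomp hf1 z⟩
    have hd : ContDiff ℝ ∞ (fderiv ℝ f) := hf.fderiv_right (by simp)
    exact (pointwiseApply (K := K) (E := E) (F := F)).contDiff.comp (ih hd)

/-- Postcomposition with a smooth map is smooth on spaces of continuous functions. -/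
theorem contDiff_postcomp {K E F : Type} [TopologicalSpace K] [CompactSpace K]
    [NormedAddCommGroup E] [NormedSpace ℝ E] [NormedAddCommGroup F] [NormedSpace ℝ F]
    {f : E → F} (hf : ContDiff ℝ ∞ f) :
    ContDiff ℝ ∞ (fun w : C(K, E) => (⟨f, hf.continuous⟩ : C(E, F)).comp w) :=
  contDiff_infty.2 fun n => contDiff_postcomp_nat n hf

section Primitive

variable {E : Type} [NormedAddCommGroup E]

/-- The extension of a curve on `[0, 1]` to `ℝ` that is constant outside `[0, 1]`. -/
def curveExtend (z : C(unitInterval, E)) : ℝ → E := Set.IccExtend zero_le_one z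

theorem continuous_curveExtend (z : C(unitInterval, E)) : Continuous (curveExtend z) :=
  z.continuous.Icc_extend'

theorem curveExtend_coe (z : C(unitInterval, E)) (t : unitInterval) :
    curveExtend z t = z t := Set.IccExtend_val _ _ _

variable [NormedSpace ℝ E]

/-- The primitive of a curve vanishing at `0`, as a continuous linear operator. -/
def curvePrimitive : C(unitInterval, E) →L[ℝ] C(unitInterval, E) :=
  LinearMap.mkContinuous
    { toFun := fun z => ⟨fun t => ∫ s in (0 : ℝ)..t, curveExtend z s,
        (intervalIntegral.continuous_primitive
          (fun a b => (continuous_curveExtend z).intervalIntegrable a b) 0).comp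
          continuous_subtype_val⟩
      map_add' := by
        intro z w
        ext t
        exact intervalIntegral.integral_add ((continuous_curveExtend z).intervalIntegrable _ _)
          ((continuous_curveExtend w).intervalIntegrable _ _)
      map_smul' := by
        intro c z
        ext t
        exact intervalIntegral.integral_smul c (curveExtend z) } 1 (by
    intro z
    rw [ContinuousMap.norm_le _ (by positivity)]
    intro t
    have h := intervalIntegral.norm_integral_le_of_norm_le_const (a := 0) (b := (t : ℝ))
      (f := curveExtend z) (C := ‖z‖) (fun s _ => z.norm_coe_le_norm _)
    have ht : |(t : ℝ) - 0| ≤ 1 := by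
      rw [sub_zero, abs_of_nonneg t.2.1]; exact t.2.2
    calc _ ≤ ‖z‖ * |(t : ℝ) - 0| := h
      _ ≤ ‖z‖ * 1 := by gcongr
      _ = 1 * ‖z‖ := by ring)

theorem curvePrimitive_apply (z : C(unitInterval, E)) (t : unitInterval) :
    curvePrimitive z t = ∫ s in (0 : ℝ)..t, curveExtend z s := rfl

end Primitive

/-- The inverse function theorem for smooth maps on an open set, with a smooth inverse on the whole
target. -/
theorem exists_local_diffeo {E F : Type} [NormedAddCommGroup E] [NormedSpace ℝ E]
    [CompleteSpace E] [NormedAddCommGroup F] [NormedSpace ℝ F] {f : E → F} {U : Set E}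
    (hU : IsOpen U) (hf : ContDiffOn ℝ ∞ f U) {a : E} (ha : a ∈ U) (f' : E ≃L[ℝ] F)
    (hf' : HasFDerivAt f (f' : E →L[ℝ] F) a) :
    ∃ e : OpenPartialHomeomorph E F, a ∈ e.source ∧ e.source ⊆ U ∧ (∀ x, e x = f x) ∧
      ContDiffOn ℝ ∞ e.symm e.target ∧
      ∀ x ∈ e.source, ∃ g : E ≃L[ℝ] F, HasFDerivAt f (g : E →L[ℝ] F) x := by
  have hfa : ∀ x ∈ U, ContDiffAt ℝ ∞ f x := fun x hx => hf.contDiffAt (hU.mem_nhds hx)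
  have hcont : ContinuousOn (fderiv ℝ f) U := hf.continuousOn_fderiv_of_isOpen hU (by simp)
  have hV : IsOpen (U ∩ fderiv ℝ f ⁻¹' Set.range ((↑) : (E ≃L[ℝ] F) → E →L[ℝ] F)) :=
    hcont.isOpen_inter_preimage hU ContinuousLinearEquiv.isOpen
  set V := U ∩ fderiv ℝ f ⁻¹' Set.range ((↑) : (E ≃L[ℝ] F) → E →L[ℝ] F)
  have hVd : ∀ x ∈ V, ∃ g : E ≃L[ℝ] F, HasFDerivAt f (g : E →L[ℝ] F) x := by
    rintro x ⟨hxU, g, hg⟩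
    refine ⟨g, ?_⟩
    rw [hg]
    exact ((hfa x hxU).differentiableAt (by simp)).hasFDerivAt
  set e := ((hfa a ha).toOpenPartialHomeomorph f hf' (by simp)).restrOpen V hV
  have hes : e.source ⊆ V := Set.inter_subset_right
  have hef : ∀ x, e x = f x := fun x => rfl
  refine ⟨e, ⟨(hfa a ha).mem_toOpenPartialHomeomorph_source hf' (by simp), ha, f', ?_⟩,
    hes.trans Set.inter_subset_left, hef, ?_, fun x hx => hVd x (hes hx)⟩
  · exact hf'.fderiv.symm
  · intro y hy
    obtain ⟨g, hg⟩ := hVd _ (hes (e.map_target hy))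
    exact (e.contDiffAt_symm hy hg (hfa _ (hes (e.map_target hy)).1)).contDiffWithinAt

section Flow

variable {E : Type} [NormedAddCommGroup E] [NormedSpace ℝ E]

/-- The curve `t ↦ A (z t) x`. -/
def velocity {A : E → E →L[ℝ] E} (hA : ContDiff ℝ ∞ A) (x : E) (z : C(unitInterval, E)) :
    C(unitInterval, E) :=
  pointwiseApply ((⟨A, hA.continuous⟩ : C(E, E →L[ℝ] E)).comp z)
    (ContinuousLinearMap.const ℝ unitInterval x)

/-- The map whose zeros `((x, y), z) ↦ (_, 0)` are the solutions of `z' = A z x`, `z 0 = y`. -/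
def flowMap {A : E → E →L[ℝ] E} (hA : ContDiff ℝ ∞ A) (s : (E × E) × C(unitInterval, E)) :
    (E × E) × C(unitInterval, E) :=
  (s.1, s.2 - ContinuousLinearMap.const ℝ unitInterval s.1.2 -
    curvePrimitive (velocity hA s.1.1 s.2))

/-- The derivative of `velocity` along a variation `(h, w)` of `(x, z)`. -/
def velocityDeriv {A : E → E →L[ℝ] E} (hA : ContDiff ℝ ∞ A) (x : E) (z : C(unitInterval, E))
    (h : E) (w : C(unitInterval, E)) : C(unitInterval, E) :=
  velocity hA h z + pointwiseApply (pointwiseApply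
    ((⟨fderiv ℝ A, hA.continuous_fderiv (by simp)⟩ : C(E, E →L[ℝ] E →L[ℝ] E)).comp z) w)
    (ContinuousLinearMap.const ℝ unitInterval x)

theorem contDiff_flowMap {A : E → E →L[ℝ] E} (hA : ContDiff ℝ ∞ A) :
    ContDiff ℝ ∞ (flowMap hA) := by
  have h1 : ContDiff ℝ ∞ fun s : (E × E) × C(unitInterval, E) =>
      (⟨A, hA.continuous⟩ : C(E, E →L[ℝ] E)).comp s.2 := (contDiff_postcomp hA).comp contDiff_snd
  have h2 : ContDiff ℝ ∞ fun s : (E × E) × C(unitInterval, E) =>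
      ContinuousLinearMap.const ℝ unitInterval s.1.1 :=
    (ContinuousLinearMap.contDiff _).comp (contDiff_fst.comp contDiff_fst)
  have h3 : ContDiff ℝ ∞ fun s : (E × E) × C(unitInterval, E) =>
      ContinuousLinearMap.const ℝ unitInterval s.1.2 :=
    (ContinuousLinearMap.contDiff _).comp (contDiff_snd.comp contDiff_fst)
  have h4 : ContDiff ℝ ∞ fun s : (E × E) × C(unitInterval, E) => velocity hA s.1.1 s.2 := by
    have hB : IsBoundedBilinearMap ℝ
        fun q : C(unitInterval, E →L[ℝ] E) × C(unitInterval, E) => pointwiseApply q.1 q.2 :=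
      ContinuousLinearMap.isBoundedBilinearMap _
    exact hB.contDiff.comp (h1.prodMk h2)
  exact contDiff_fst.prodMk
    ((contDiff_snd.sub h3).sub ((ContinuousLinearMap.contDiff _).comp h4))

theorem fderiv_flowMap {A : E → E →L[ℝ] E} (hA : ContDiff ℝ ∞ A)
    (s d : (E × E) × C(unitInterval, E)) :
    fderiv ℝ (flowMap hA) s d =
      (d.1, d.2 - ContinuousLinearMap.const ℝ unitInterval d.1.2 -
        curvePrimitive (velocityDeriv hA s.1.1 s.2 d.1.1 d.2)) := by
  have h1 : HasFDerivAt (fun s : (E × E) × C(unitInterval, E) =>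
      (⟨A, hA.continuous⟩ : C(E, E →L[ℝ] E)).comp s.2) _ s :=
    (hasFDerivAt_postcomp (hA.of_le (by exact_mod_cast le_top)) s.2).comp s hasFDerivAt_snd
  have h2 : HasFDerivAt (fun s : (E × E) × C(unitInterval, E) =>
      ContinuousLinearMap.const ℝ unitInterval s.1.1) _ s :=
    (ContinuousLinearMap.hasFDerivAt _).comp s
      ((hasFDerivAt_fst (p := s.1)).comp s hasFDerivAt_fst)
  have h3 : HasFDerivAt (fun s : (E × E) × C(unitInterval, E) =>
      ContinuousLinearMap.const ℝ unitInterval s.1.2) _ s :=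
    (ContinuousLinearMap.hasFDerivAt _).comp s
      ((hasFDerivAt_snd (p := s.1)).comp s hasFDerivAt_fst)
  have h4 : HasFDerivAt (fun s : (E × E) × C(unitInterval, E) => velocity hA s.1.1 s.2) _ s :=
    (pointwiseApply (K := unitInterval) (E := E) (F := E)).hasFDerivAt_of_bilinear h1 h2
  have hJ : HasFDerivAt (fun z : C(unitInterval, E) => curvePrimitive z) curvePrimitive
    (velocity hA s.1.1 s.2) := ContinuousLinearMap.hasFDerivAt _
  have h5 : HasFDerivAt (flowMap hA) _ s := hasFDerivAt_fst.prodMk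
    ((hasFDerivAt_snd.sub h3).sub (hJ.comp s h4))
  rw [h5.fderiv]
  rfl

/-- If the fields `z ↦ A z h` commute along a solution `z` of `z' = A z x`, then `t ↦ t • A (z t) k`
solves the linearised equation. -/
theorem curvePrimitive_velocityDeriv {A : E → E →L[ℝ] E} [CompleteSpace E] (hA : ContDiff ℝ ∞ A)
    {x y : E} {z b : C(unitInterval, E)}
    (hz : z - ContinuousLinearMap.const ℝ unitInterval y - curvePrimitive (velocity hA x z) = 0)
    (k : E)
    (hcomm : ∀ t, fderiv ℝ A (z t) (A (z t) x) k = fderiv ℝ A (z t) (A (z t) k) x)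
    (hb : ∀ t : unitInterval, b t = (t : ℝ) • A (z t) k) :
    curvePrimitive (velocityDeriv hA x z k b) = b := by
  set Z : ℝ → E := fun t => y + ∫ s in (0 : ℝ)..t, curveExtend (velocity hA x z) s with hZ
  have hZd : ∀ t, HasDerivAt Z (curveExtend (velocity hA x z) t) t := fun t =>
    ((continuous_curveExtend _).integral_hasStrictDerivAt 0 t).hasDerivAt.const_add y
  have hZz : ∀ t : unitInterval, Z t = z t := by
    intro t
    have := congrArg (fun w : C(unitInterval, E) => w t) hz
    simp only [ContinuousMap.sub_apply, ContinuousMap.zero_apply, sub_sub, sub_eq_zero] at this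
    rw [this]
    rfl
  have hAd : ∀ t, HasDerivAt (fun t : ℝ => t • A (Z t) k)
      (t • fderiv ℝ A (Z t) (curveExtend (velocity hA x z) t) k + (1 : ℝ) • A (Z t) k) t := by
    intro t
    have h1 : HasDerivAt (fun t => A (Z t)) _ t :=
      ((hA.differentiable (by simp)) (Z t)).hasFDerivAt.comp_hasDerivAt t (hZd t)
    exact (hasDerivAt_id t).smul (by
      simpa using h1.clm_apply (hasDerivAt_const t k))
  ext t
  rw [curvePrimitive_apply, hb t, ← hZz t]
  have hZc : Continuous Z := continuous_iff_continuousAt.2 fun t => (hZd t).continuousAt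
  have hcont_deriv : Continuous fun t =>
      t • fderiv ℝ A (Z t) (curveExtend (velocity hA x z) t) k + (1 : ℝ) • A (Z t) k := by
    have h1 := (hA.continuous_fderiv (by simp)).comp hZc
    have h2 := continuous_curveExtend (velocity hA x z)
    have h3 := hA.continuous.comp hZc
    exact (continuous_id.smul ((h1.clm_apply h2).clm_apply continuous_const)).add
      ((h3.clm_apply continuous_const).const_smul _)
  have hftc := intervalIntegral.integral_eq_sub_of_hasDerivAt (a := 0) (b := (t : ℝ))
    (fun s _ => hAd s) (hcont_deriv.intervalIntegrable _ _)
  rw [zero_smul, sub_zero] at hftc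
  rw [← hftc]
  refine intervalIntegral.integral_congr fun s hs => ?_
  rw [Set.uIcc_of_le t.2.1] at hs
  obtain ⟨s', rfl⟩ : ∃ s' : unitInterval, (s' : ℝ) = s :=
    ⟨⟨s, hs.1, hs.2.trans t.2.2⟩, rfl⟩
  simp only [curveExtend_coe, hZz]
  change A (z s') k + fderiv ℝ A (z s') (b s') x = _
  rw [hb, map_smul, _root_.smul_apply, ← hcomm, one_smul, add_comm]
  rfl

/-- Local integration of a family `A` of commuting vector fields: the time-one map of `A · x`. -/
theorem exists_commuting_flow [CompleteSpace E] {A : E → E →L[ℝ] E} (hA : ContDiff ℝ ∞ A)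
    {V : Set E} (hV : IsOpen V) {p : E} (hp : p ∈ V)
    (hcomm : ∀ z ∈ V, ∀ h k, fderiv ℝ A z (A z h) k = fderiv ℝ A z (A z k) h) :
    ∃ (G : E × E → E) (O : Set (E × E)), IsOpen O ∧ (0, p) ∈ O ∧ ContDiffOn ℝ ∞ G O ∧
      (∀ q ∈ O, ∀ k, fderiv ℝ G q (k, 0) = A (G q) k) ∧
      ∀ y, (0, y) ∈ O → G (0, y) = y := by
  let cst := ContinuousLinearMap.const (M := E) ℝ unitInterval
  let s₀ : (E × E) × C(unitInterval, E) := ((0, p), cst p)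
  have hvel0 : ∀ z, velocity hA (0 : E) z = 0 := fun z => by ext t; exact map_zero (A (z t))
  have hs₀ : flowMap hA s₀ = ((0, p), 0) := by
    simp [flowMap, s₀, hvel0, cst]
  let M : (E × E) →L[ℝ] C(unitInterval, E) :=
    cst ∘L ContinuousLinearMap.snd ℝ E E + curvePrimitive ∘L
      (pointwiseApply ((⟨A, hA.continuous⟩ : C(E, E →L[ℝ] E)).comp (cst p))) ∘L cst ∘L
        ContinuousLinearMap.fst ℝ E E
  let f' : ((E × E) × C(unitInterval, E)) ≃L[ℝ] ((E × E) × C(unitInterval, E)) :=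
    (ContinuousLinearEquiv.refl ℝ _).skewProd (ContinuousLinearEquiv.refl ℝ _) (-M)
  have hH := contDiff_flowMap hA
  have hf' : HasFDerivAt (flowMap hA) (f' : _ →L[ℝ] _) s₀ := by
    have h := (hH.differentiable (by simp) s₀).hasFDerivAt
    suffices (f' : _ →L[ℝ] _) = fderiv ℝ (flowMap hA) s₀ by rwa [this]
    refine ContinuousLinearMap.ext fun d => ?_
    rw [fderiv_flowMap]
    refine Prod.ext rfl ?_
    have : velocityDeriv hA s₀.1.1 s₀.2 d.1.1 d.2 = velocity hA d.1.1 (cst p) := by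
      ext t
      change A p d.1.1 + fderiv ℝ A p (d.2 t) 0 = A p d.1.1
      simp
    rw [this]
    change d.2 + -(cst d.1.2 + curvePrimitive (velocity hA d.1.1 (cst p))) = _
    simp only [cst]
    abel
  have hopen : IsOpen {s : (E × E) × C(unitInterval, E) | Set.MapsTo s.2 Set.univ V} :=
    (ContinuousMap.isOpen_setOfPred_mapsTo isCompact_univ hV).preimage continuous_snd
  obtain ⟨e, hes, heV, hef, hesm, hed⟩ := exists_local_diffeo hopen hH.contDiffOn
    (a := s₀) (fun t _ => hp) f' hf'
  let ι₀ : E × E → (E × E) × C(unitInterval, E) := fun q => (q, 0)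
  have hι₀ : ContDiff ℝ ∞ ι₀ := contDiff_id.prodMk contDiff_const
  let O := ι₀ ⁻¹' e.target
  have hO : IsOpen O := e.open_target.preimage hι₀.continuous
  let ζ : E × E → C(unitInterval, E) := fun q => (e.symm (ι₀ q)).2
  have hζ : ContDiffOn ℝ ∞ ζ O :=
    contDiff_snd.comp_contDiffOn (hesm.comp hι₀.contDiffOn (fun _ h => h))
  have hflow : ∀ q ∈ O, flowMap hA (q, ζ q) = (q, 0) ∧ (q, ζ q) ∈ e.source := by
    intro q hq
    have h1 : flowMap hA (e.symm (ι₀ q)) = (q, 0) := by rw [← hef]; exact e.right_inv hq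
    have h2 : (e.symm (ι₀ q)).1 = q := congrArg Prod.fst h1
    have h3 : e.symm (ι₀ q) = (q, ζ q) := Prod.ext h2 rfl
    exact ⟨h3 ▸ h1, h3 ▸ e.map_target hq⟩
  refine ⟨fun q => ζ q 1, O, hO, ?_, ?_, ?_, ?_⟩
  · change ((0, p), 0) ∈ e.target
    rw [← hs₀, ← hef]
    exact e.map_source hes
  · exact (ContinuousMap.evalCLM ℝ (1 : unitInterval)).contDiff.comp_contDiffOn hζ
  · intro q hq k
    obtain ⟨hq1, hq2⟩ := hflow q hq
    have hζd : HasFDerivAt ζ (fderiv ℝ ζ q) q :=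
      ((hζ.contDiffAt (hO.mem_nhds hq)).differentiableAt (by simp)).hasFDerivAt
    have hG : HasFDerivAt (fun q => ζ q 1)
        (ContinuousMap.evalCLM ℝ (1 : unitInterval) ∘L fderiv ℝ ζ q) q := by
      have hev := (ContinuousMap.evalCLM (M := E) ℝ (1 : unitInterval)).hasFDerivAt (x := ζ q)
      exact hev.comp q hζd
    obtain ⟨g, hg⟩ := hed _ hq2
    have hcomp := hg.comp q ((hasFDerivAt_id q).prodMk hζd)
    have hconst : (fun q => flowMap hA (q, ζ q)) =ᶠ[𝓝 q] ι₀ :=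
      Filter.eventually_of_mem (hO.mem_nhds hq) fun q' hq' => (hflow q' hq').1
    have hι₀d : HasFDerivAt ι₀ ((ContinuousLinearMap.id ℝ (E × E)).prod 0) q :=
      (hasFDerivAt_id q).prodMk (hasFDerivAt_const _ q)
    have heq := congrArg (fun T : E × E →L[ℝ] (E × E) × C(unitInterval, E) => T (k, 0))
      (hcomp.unique (hι₀d.congr_of_eventuallyEq hconst))
    let b : C(unitInterval, E) := ⟨fun t => (t : ℝ) • A (ζ q t) k, by
      have := hA.continuous
      fun_prop⟩
    have hb := curvePrimitive_velocityDeriv hA (congrArg Prod.snd hq1) k (b := b)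
      (fun t => hcomm _ (heV hq2 (Set.mem_univ t)) _ _) (fun t => rfl)
    have hgb : g (((k, 0) : E × E), b) = ((k, 0), 0) := by
      have : g (((k, 0) : E × E), b) = fderiv ℝ (flowMap hA) (q, ζ q) ((k, 0), b) := by
        rw [hg.fderiv]; rfl
      rw [this, fderiv_flowMap]
      simp [hb]
    have hdb : (((k, 0) : E × E), fderiv ℝ ζ q (k, 0)) = ((k, 0), b) := by
      apply g.injective
      rw [hgb]
      exact heq
    rw [hG.fderiv]
    have : fderiv ℝ ζ q (k, 0) = b := congrArg Prod.snd hdb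
    simp [this, b]
  · intro y hy
    have h := congrArg Prod.snd (hflow _ hy).1
    simp only [flowMap, hvel0, map_zero, sub_zero, sub_eq_zero] at h
    simp [h]

end Flow

/-- A function that is smooth near `p` agrees near `p` with a globally smooth function. -/
theorem exists_contDiff_eqOn_nhds {E F : Type} [NormedAddCommGroup E] [NormedSpace ℝ E]
    [FiniteDimensional ℝ E] [NormedAddCommGroup F] [NormedSpace ℝ F] {f : E → F} {U : Set E}
    (hU : IsOpen U) (hf : ContDiffOn ℝ ∞ f U) {p : E} (hp : p ∈ U) :
    ∃ (g : E → F) (V : Set E), ContDiff ℝ ∞ g ∧ IsOpen V ∧ p ∈ V ∧ V ⊆ U ∧ Set.EqOn g f V := by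
  obtain ⟨R, hR, hRU⟩ := Metric.isOpen_iff.1 hU p hp
  let b : ContDiffBump p := ⟨R / 4, R / 2, by positivity, by linarith⟩
  refine ⟨fun x => b x • f x, Metric.ball p (R / 4), ?_, Metric.isOpen_ball,
    Metric.mem_ball_self (by positivity), (Metric.ball_subset_ball (by linarith)).trans hRU, ?_⟩
  · rw [contDiff_iff_contDiffAt]
    intro x
    by_cases hx : x ∈ Metric.ball p R
    · exact b.contDiffAt.smul (hf.contDiffAt (hU.mem_nhds (hRU hx)))
    · have hx' : x ∉ tsupport b := by
        rw [b.tsupport_eq]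
        intro h
        exact hx (Metric.closedBall_subset_ball (by change R / 2 < R; linarith) h)
      have : (fun x => b x • f x) =ᶠ[𝓝 x] fun _ => 0 := by
        filter_upwards [(isClosed_tsupport b).isOpen_compl.mem_nhds hx'] with y hy
        rw [image_eq_zero_of_notMem_tsupport hy, zero_smul]
      exact contDiffAt_const.congr_of_eventuallyEq this
  · intro x hx
    simp [b.one_of_mem_closedBall (Metric.ball_subset_closedBall hx)]

/-- Frobenius' theorem for the distribution `range (P z)` of a smooth family of projections:
there is a local submersion whose differential annihilates the distribution. -/
theorem exists_first_integrals {E : Type} [NormedAddCommGroup E] [NormedSpace ℝ E]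
    [FiniteDimensional ℝ E] {P : E → E →L[ℝ] E} {U : Set E} (hU : IsOpen U)
    (hP : ContDiffOn ℝ ∞ P U) (hproj : ∀ z ∈ U, P z * P z = P z)
    (hinv : ∀ z ∈ U, ∀ u v, P z u = u → P z v = v → fderiv ℝ P z u v = fderiv ℝ P z v u)
    {p : E} (hp : p ∈ U) :
    ∃ (f : E → E) (V : Set E), IsOpen V ∧ p ∈ V ∧ V ⊆ U ∧ ContDiffOn ℝ ∞ f V ∧
      (∀ z ∈ V, fderiv ℝ f z * P z = 0) ∧ (∀ z ∈ V, P p * fderiv ℝ f z = 0) ∧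
      fderiv ℝ f p = 1 - P p := by
  have : CompleteSpace E := FiniteDimensional.complete ℝ E
  set P₀ := P p with hP₀
  have hP₀₀ : P₀ * P₀ = P₀ := hproj p hp
  set B : E → E →L[ℝ] E := fun z => P₀ * P z + (1 - P₀) * (1 - P z) with hB
  have hBsm : ContDiffOn ℝ ∞ B U := by
    have hc : ∀ T : E →L[ℝ] E, ContDiffOn ℝ ∞ (fun _ : E => T) U := fun T => contDiffOn_const
    exact ((hc P₀).mul hP).add ((hc (1 - P₀)).mul ((hc 1).sub hP))
  have hBp : B p = 1 := by
    simp only [hB, ← hP₀, mul_sub, sub_mul, mul_one, one_mul, hP₀₀]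
    abel
  have hU₁ : IsOpen (U ∩ B ⁻¹' {T | IsUnit T}) :=
    hBsm.continuousOn.isOpen_inter_preimage hU Units.isOpen
  set U₁ := U ∩ B ⁻¹' {T | IsUnit T} with hU₁def
  have hpU₁ : p ∈ U₁ := ⟨hp, by change IsUnit (B p); rw [hBp]; exact isUnit_one⟩
  set A₀ : E → E →L[ℝ] E := fun z => Ring.inverse (B z) * P₀ with hA₀
  have hA₀sm : ContDiffOn ℝ ∞ A₀ U₁ := by
    intro z hz
    obtain ⟨w, hw⟩ : IsUnit (B z) := hz.2
    have h1 : ContDiffAt ℝ ∞ Ring.inverse (B z) := hw ▸ contDiffAt_ringInverse ℝ w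
    have h2 : ContDiffAt ℝ ∞ (fun z => Ring.inverse (B z)) z :=
      h1.comp z (hBsm.contDiffAt (hU.mem_nhds hz.1))
    exact (h2.mul contDiffAt_const).contDiffWithinAt
  have hBP : ∀ z ∈ U, B z * P z = P₀ * P z := by
    intro z hz
    have h : (1 - P z) * P z = 0 := by rw [sub_mul, one_mul, hproj z hz, sub_self]
    simp only [hB]
    rw [add_mul, mul_assoc, hproj z hz, mul_assoc, h, mul_zero, add_zero]
  have hP₀B : ∀ z, P₀ * B z = P₀ * P z := by
    intro z
    have h : P₀ * (1 - P₀) = 0 := by rw [mul_sub, mul_one, hP₀₀, sub_self]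
    simp only [hB]
    rw [mul_add, ← mul_assoc, ← mul_assoc, hP₀₀, h, zero_mul, add_zero]
  have hinvB : ∀ z ∈ U₁, Ring.inverse (B z) * B z = 1 ∧ B z * Ring.inverse (B z) = 1 :=
    fun z hz => ⟨Ring.inverse_mul_cancel _ hz.2, Ring.mul_inverse_cancel _ hz.2⟩
  have hBA : ∀ z ∈ U₁, B z * A₀ z = P₀ := by
    intro z hz
    simp only [hA₀]
    rw [← mul_assoc, (hinvB z hz).2, one_mul]
  have hPA : ∀ z ∈ U₁, P z * A₀ z = A₀ z := by
    intro z hz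
    have h1 : B z * (P z * A₀ z) = B z * A₀ z := by
      rw [← mul_assoc, hBP z hz.1, ← hP₀B, mul_assoc, hBA z hz, hP₀₀]
    have h2 := congrArg (fun T => Ring.inverse (B z) * T) h1
    simpa only [← mul_assoc, (hinvB z hz).1, one_mul] using h2
  have hP₀A : ∀ z ∈ U₁, P₀ * A₀ z = P₀ := by
    intro z hz
    rw [← hPA z hz, ← mul_assoc, ← hBP z hz.1, mul_assoc, hPA z hz, hBA z hz]
  have hAP : ∀ z ∈ U₁, A₀ z * P z = P z := by
    intro z hz
    simp only [hA₀]
    rw [mul_assoc, ← hBP z hz.1, ← mul_assoc, (hinvB z hz).1, one_mul]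
  obtain ⟨A, V₁, hA, hV₁, hpV₁, hV₁U, hAeq⟩ := exists_contDiff_eqOn_nhds hU₁ hA₀sm hpU₁
  have hcomm : ∀ z ∈ V₁, ∀ h k, fderiv ℝ A z (A z h) k = fderiv ℝ A z (A z k) h := by
    intro z hz h k
    have hzU₁ := hV₁U hz
    have hAd : HasFDerivAt A (fderiv ℝ A z) z := (hA.differentiable (by simp) z).hasFDerivAt
    have hPd : HasFDerivAt P (fderiv ℝ P z) z :=
      ((hP.contDiffAt (hU.mem_nhds hzU₁.1)).differentiableAt (by simp)).hasFDerivAt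
    have e1 : (fun z => P z * A z) =ᶠ[𝓝 z] A :=
      eventually_of_mem (hV₁.mem_nhds hz) fun w hw => by
        change P w * A w = A w
        rw [hAeq hw]
        exact hPA w (hV₁U hw)
    have e2 : (fun z => P₀ * A z) =ᶠ[𝓝 z] fun _ => P₀ :=
      eventually_of_mem (hV₁.mem_nhds hz) fun w hw => by
        change P₀ * A w = P₀
        rw [hAeq hw]
        exact hP₀A w (hV₁U hw)
    have d1 : ∀ w k, P z (fderiv ℝ A z w k) + fderiv ℝ P z w (A z k) = fderiv ℝ A z w k := by
      intro w k
      have := (hPd.clm_comp hAd).unique (hAd.congr_of_eventuallyEq e1)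
      exact congrArg (fun T : E →L[ℝ] E →L[ℝ] E => T w k) this
    have d2 : ∀ w k, P₀ (fderiv ℝ A z w k) = 0 := by
      intro w k
      have := ((hasFDerivAt_const P₀ z).clm_comp hAd).unique
        ((hasFDerivAt_const P₀ z).congr_of_eventuallyEq e2)
      simpa using congrArg (fun T : E →L[ℝ] E →L[ℝ] E => T w k) this
    have hPAz : ∀ k, P z (A z k) = A z k := fun k => by
      rw [hAeq hz]
      exact congrArg (fun T : E →L[ℝ] E => T k) (hPA z hzU₁)
    set X := fderiv ℝ A z (A z h) k - fderiv ℝ A z (A z k) h with hX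
    have hX1 : P z X = X := by
      have h1 := d1 (A z h) k
      have h2 := d1 (A z k) h
      have h3 := hinv z hzU₁.1 _ _ (hPAz h) (hPAz k)
      rw [← h3] at h2
      rw [hX, map_sub, eq_sub_of_add_eq h1, eq_sub_of_add_eq h2]
      abel
    have hX2 : P₀ X = 0 := by rw [hX, map_sub, d2, d2, sub_zero]
    have hX3 : B z X = 0 := by
      change P₀ (P z X) + (1 - P₀) (X - P z X) = 0
      rw [hX1, hX2, sub_self, map_zero, add_zero]
    have hX4 : X = Ring.inverse (B z) (B z X) :=
      (congrArg (fun T : E →L[ℝ] E => T X) (hinvB z hzU₁).1).symm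
    rw [hX3, map_zero] at hX4
    exact sub_eq_zero.1 hX4
  obtain ⟨G, O, hO, hpO, hG, hGd, hG0⟩ := exists_commuting_flow hA hV₁ hpV₁ hcomm
  let j : E → E × E := fun u => (P₀ u, p + (1 - P₀) u)
  have hj : ContDiff ℝ ∞ j :=
    P₀.contDiff.prodMk (contDiff_const.add (1 - P₀ : E →L[ℝ] E).contDiff)
  have hjd : ∀ u, HasFDerivAt j (P₀.prod (1 - P₀)) u := fun u =>
    P₀.hasFDerivAt.prodMk ((1 - P₀ : E →L[ℝ] E).hasFDerivAt.const_add p)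
  have hj0 : j 0 = (0, p) := by simp [j]
  have hO' : IsOpen (j ⁻¹' O) := hO.preimage hj.continuous
  have hΘ : ContDiffOn ℝ ∞ (G ∘ j) (j ⁻¹' O) := hG.comp hj.contDiffOn fun _ h => h
  have hΘ0 : (G ∘ j) 0 = p := by simp only [Function.comp, hj0, hG0 p hpO]
  have hO'' : IsOpen (j ⁻¹' O ∩ (G ∘ j) ⁻¹' V₁) := hΘ.continuousOn.isOpen_inter_preimage hO' hV₁
  have hGdiff : ∀ q ∈ O, HasFDerivAt G (fderiv ℝ G q) q := fun q hq =>
    ((hG.contDiffAt (hO.mem_nhds hq)).differentiableAt (by simp)).hasFDerivAt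
  have hΘd : ∀ u ∈ j ⁻¹' O, HasFDerivAt (G ∘ j) (fderiv ℝ G (j u) ∘L P₀.prod (1 - P₀)) u :=
    fun u hu => (hGdiff _ hu).comp u (hjd u)
  have h0O : (0 : E) ∈ j ⁻¹' O := by change j 0 ∈ O; rw [hj0]; exact hpO
  have hAp : A p = P₀ := by
    rw [hAeq hpV₁]
    simp only [hA₀]
    rw [hBp, Ring.inverse_one, one_mul]
  have hΘd0 : HasFDerivAt (G ∘ j) ((ContinuousLinearEquiv.refl ℝ E : E ≃L[ℝ] E) : E →L[ℝ] E) 0 := by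
    convert hΘd 0 h0O using 1
    refine ContinuousLinearMap.ext fun w => ?_
    rw [hj0]
    have hy : ∀ k : E, fderiv ℝ G (0, p) (0, k) = k := by
      intro k
      have h1 : HasFDerivAt (fun y : E => G (0, y))
          (fderiv ℝ G (0, p) ∘L ContinuousLinearMap.inr ℝ E E) p :=
        (hGdiff _ hpO).comp p (hasFDerivAt_prodMk_right 0 p)
      have h2 : (fun y : E => G (0, y)) =ᶠ[𝓝 p] id :=
        eventually_of_mem ((hO.preimage (Continuous.prodMk_right (0 : E))).mem_nhds hpO)
          fun y hy => hG0 y hy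
      have h3 := h1.unique ((hasFDerivAt_id p).congr_of_eventuallyEq h2)
      exact congrArg (fun T : E →L[ℝ] E => T k) h3
    have hsplit : ((P₀ w, (1 - P₀) w) : E × E) = (P₀ w, 0) + (0, (1 - P₀) w) := by simp
    change w = fderiv ℝ G (0, p) (P₀ w, (1 - P₀) w)
    rw [hsplit, map_add, hy, hGd _ hpO, hG0 p hpO, hAp]
    change w = (P₀ * P₀) w + (w - P₀ w)
    rw [hP₀₀]
    abel
  obtain ⟨e, he0, heO, hef, hesm, hed⟩ := exists_local_diffeo hO'' (hΘ.mono Set.inter_subset_left)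
    (a := 0) ⟨h0O, by change (G ∘ j) 0 ∈ V₁; rw [hΘ0]; exact hpV₁⟩ _ hΘd0
  have hpt : p ∈ e.target := by
    rw [← hΘ0, ← hef]
    exact e.map_source he0
  have hsymmp : e.symm p = 0 := by
    rw [← hΘ0, ← hef]
    exact e.left_inv he0
  have hfd : ∀ z ∈ e.target, HasFDerivAt (fun z => (1 - P₀) (e.symm z))
      ((1 - P₀) * fderiv ℝ e.symm z) z := fun z hz =>
    (1 - P₀ : E →L[ℝ] E).hasFDerivAt.comp z
      ((hesm.contDiffAt (e.open_target.mem_nhds hz)).differentiableAt (by simp)).hasFDerivAt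
  have hee : (e : E → E) = G ∘ j := funext hef
  have hQP : P₀ * (1 - P₀) = 0 := by rw [mul_sub, hP₀₀, mul_one, sub_self]
  refine ⟨fun z => (1 - P₀) (e.symm z), e.target, e.open_target, hpt, ?_, ?_, ?_, ?_, ?_⟩
  · intro z hz
    have h := (heO (e.map_target hz)).2
    rw [Set.mem_preimage, ← hef, e.right_inv hz] at h
    exact (hV₁U h).1
  · exact (1 - P₀ : E →L[ℝ] E).contDiff.comp_contDiffOn hesm
  · intro z hz
    have hu := heO (e.map_target hz)
    have hGz : (G ∘ j) (e.symm z) = z := by rw [← hef, e.right_inv hz]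
    have hzV : z ∈ V₁ := by rw [← hGz]; exact hu.2
    obtain ⟨g, hg⟩ := hed _ (e.map_target hz)
    have hgs : HasFDerivAt e.symm (g.symm : E →L[ℝ] E) z :=
      e.hasFDerivAt_symm hz (by rw [hee]; exact hg)
    rw [(hfd z hz).fderiv, hgs.fderiv]
    refine ContinuousLinearMap.ext fun v => ?_
    change (1 - P₀) (g.symm (P z v)) = 0
    have hgv : g (P₀ (P z v)) = P z v := by
      have h1 : (g : E →L[ℝ] E) = _ := hg.unique (hΘd _ hu.1)
      have h2 : g (P₀ (P z v)) = (g : E →L[ℝ] E) (P₀ (P z v)) := rfl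
      have h3 : ∀ w, P₀ (P₀ w) = P₀ w := fun w => congrArg (fun T : E →L[ℝ] E => T w) hP₀₀
      rw [h2, h1]
      change fderiv ℝ G (j (e.symm z)) (P₀ (P₀ (P z v)), P₀ (P z v) - P₀ (P₀ (P z v))) = _
      rw [h3, sub_self, hGd _ hu.1]
      change A ((G ∘ j) (e.symm z)) _ = _
      rw [hGz, hAeq hzV]
      have h4 : A₀ z * P₀ = A₀ z := by simp only [hA₀, mul_assoc, hP₀₀]
      change (A₀ z * P₀ * P z) v = _
      rw [h4, hAP z (hV₁U hzV)]
    rw [← hgv, g.symm_apply_apply]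
    change P₀ (P z v) - P₀ (P₀ (P z v)) = 0
    rw [sub_eq_zero]
    exact (congrArg (fun T : E →L[ℝ] E => T (P z v)) hP₀₀).symm
  · intro z hz
    rw [(hfd z hz).fderiv, ← mul_assoc, hQP, zero_mul]
  · have hgs : HasFDerivAt e.symm
        ((ContinuousLinearEquiv.refl ℝ E).symm : E →L[ℝ] E) p :=
      e.hasFDerivAt_symm hpt (by rw [hee, hsymmp]; exact hΘd0)
    rw [(hfd p hpt).fderiv, hgs.fderiv]
    exact mul_one _

theorem SemiconjBy.aeval {R A : Type} [CommRing R] [Ring A] [Algebra R A] {t a b : A}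
    (h : SemiconjBy t a b) (p : R[X]) :
    SemiconjBy t (Polynomial.aeval a p) (Polynomial.aeval b p) := by
  induction p using Polynomial.induction_on' with
  | add p q hp hq => simpa only [map_add] using hp.add_right hq
  | monomial n c =>
    simp only [aeval_monomial]
    have hc : SemiconjBy t (algebraMap R A c) (algebraMap R A c) := (Algebra.commutes c t).symm
    exact hc.mul_right (h.pow_right n)

section PolynomialKernels

variable {E : Type} [NormedAddCommGroup E] [NormedSpace ℝ E]

theorem eq_zero_of_aeval_apply_eq_zero {L : E →L[ℝ] E} {p q : ℝ[X]} (h : IsCoprime p q) {w : E}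
    (hp : aeval L p w = 0) (hq : aeval L q w = 0) : w = 0 := by
  obtain ⟨a, b, hab⟩ := h
  have h1 := congrArg (fun T : E →L[ℝ] E => T w) (congrArg (aeval L) hab)
  simp only [map_add, map_mul, map_one] at h1
  change aeval L a (aeval L p w) + aeval L b (aeval L q w) = w at h1
  rw [hp, hq, map_zero, map_zero, add_zero] at h1
  exact h1.symm

/-- If `C` intertwines `L` with itself on the range of an `L`-invariant projection `P` with
`p(L) P = 0`, and `C` maps this range into `ker q(L)` with `q` coprime to `p`, then `C`
vanishes on it. -/
theorem eq_zero_of_intertwines {L P C : E →L[ℝ] E} {p q : ℝ[X]} (hpq : IsCoprime p q)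
    (hPP : P * P = P) (hPL : P * L = L * P) (hp : aeval L p * P = 0)
    (hC : ∀ u, P u = u → C (L u) = L (C u)) (hq : ∀ u, P u = u → aeval L q (C u) = 0)
    {u : E} (hu : P u = u) : C u = 0 := by
  have h : SemiconjBy (C * P) L L := by
    refine ContinuousLinearMap.ext fun v => ?_
    change C ((P * L) v) = L (C (P v))
    rw [hPL]
    exact hC (P v) (congrArg (fun T : E →L[ℝ] E => T v) hPP)
  have h' : SemiconjBy P L L := hPL
  refine eq_zero_of_aeval_apply_eq_zero hpq ?_ (hq u hu)
  have h1 := congrArg (fun T : E →L[ℝ] E => T u) (h.aeval p).eq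
  rw [mul_assoc, (h'.aeval p).eq, hp, mul_zero] at h1
  change 0 = aeval L p (C (P u)) at h1
  rw [hu] at h1
  exact h1.symm

/-- Infinitesimal form of the integrability of `ker p(L)` for a Nijenhuis operator `L`. -/
theorem projection_deriv_symm {L P : E →L[ℝ] E} {DL DP : E →L[ℝ] E →L[ℝ] E} {p q : ℝ[X]}
    (hpq : IsCoprime p q) (hPP : P * P = P) (hPL : P * L = L * P)
    (hp : aeval L p * P = 0) (hq : aeval L q * (1 - P) = 0)
    (hDP : ∀ w, DP w * P + P * DP w = DP w)
    (hDL : ∀ w, DP w * L + P * DL w = DL w * P + L * DP w)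
    (htor : ∀ u v, L (DL v u) - L (DL u v) + DL (L u) v - DL (L v) u = 0)
    {u v : E} (hu : P u = u) (hv : P v = v) : DP u v = DP v u := by
  have hq' : ∀ w, P w = 0 → aeval L q w = 0 := by
    intro w hw
    have := congrArg (fun T : E →L[ℝ] E => T w) hq
    change aeval L q (w - P w) = 0 at this
    rwa [hw, sub_zero] at this
  have hPL' : ∀ w, P (L w) = L (P w) := fun w => congrArg (fun T : E →L[ℝ] E => T w) hPL
  have h1 : ∀ w v, P v = v → P (DP w v) = 0 := by
    intro w v hv
    have : DP w (P v) + P (DP w v) = DP w v := congrArg (fun T : E →L[ℝ] E => T v) (hDP w)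
    rwa [hv, add_eq_left] at this
  have hinvL : ∀ w, P w = w → P (L w) = L w := fun w hw => by rw [hPL', hw]
  have h2 : ∀ w v, P v = v → P (DL w v) = DL w v + L (DP w v) - DP w (L v) := by
    intro w v hv
    have : DP w (L v) + P (DL w v) = DL w (P v) + L (DP w v) :=
      congrArg (fun T : E →L[ℝ] E => T v) (hDL w)
    rw [hv] at this
    rw [← this, add_sub_cancel_left]
  let B : E → E →L[ℝ] E := fun v => DP.flip v - DP v
  have hB : ∀ u v, B v u = DP u v - DP v u := fun u v => rfl
  have hBanti : ∀ u v, B v u = - B u v := fun u v => by rw [hB, hB, neg_sub]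
  have hPB : ∀ u v, P u = u → P v = v → P (B v u) = 0 := by
    intro u v hu hv
    rw [hB, map_sub, h1 _ _ hv, h1 _ _ hu, sub_zero]
  have h3 : ∀ u v, P u = u → P v = v →
      B (L v) (L u) - L (B v (L u)) - L (B (L v) u) + L (L (B v u)) = 0 := by
    intro u v hu hv
    have h4 := htor u v
    have h5 := congrArg P h4
    simp only [map_add, map_sub, hPL', h2 _ _ hu, h2 _ _ hv, map_zero] at h5
    simp only [hB, map_sub]
    rw [← sub_eq_zero.2 (h4.trans h5.symm)]
    abel
  have hC : ∀ u v, P u = u → P v = v → L (B v u) = B (L v) u := by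
    intro u v hu hv
    have := eq_zero_of_intertwines (C := L * B v - B (L v)) hpq hPP hPL hp ?_ ?_ hu
    · exact sub_eq_zero.1 this
    · intro u hu
      change L (B v (L u)) - B (L v) (L u) = L (L (B v u) - B (L v) u)
      have := h3 u v hu hv
      rw [map_sub, ← sub_eq_zero, ← neg_eq_zero, ← this]
      abel
    · intro u hu
      refine hq' _ ?_
      change P (L (B v u) - B (L v) u) = 0
      rw [map_sub, hPL', hPB u v hu hv, hPB u _ hu (hinvL v hv), map_zero, sub_zero]
  have := eq_zero_of_intertwines (C := B v) hpq hPP hPL hp ?_ ?_ hu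
  · exact sub_eq_zero.1 this
  · intro u hu
    rw [hBanti, ← hC v u hv hu, hBanti v u, map_neg, neg_neg]
  · exact fun u hu => hq' _ (hPB u v hu hv)

/-- A block-diagonal Nijenhuis operator whose blocks have no common eigenvalues: each block
only depends on its own coordinates. -/
theorem block_deriv_eq_zero {L P : E →L[ℝ] E} {DL : E →L[ℝ] E →L[ℝ] E} {p q : ℝ[X]}
    (hpq : IsCoprime p q) (hPP : P * P = P) (hPL : P * L = L * P)
    (hp : aeval L p * P = 0) (hq : aeval L q * (1 - P) = 0)
    (hDL : ∀ w, P * DL w = DL w * P)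
    (htor : ∀ u v, L (DL v u) - L (DL u v) + DL (L u) v - DL (L v) u = 0)
    {a b : E} (ha : P a = a) (hb : P b = 0) : DL b a = 0 := by
  have hPL' : ∀ w, P (L w) = L (P w) := fun w => congrArg (fun T : E →L[ℝ] E => T w) hPL
  have hDL' : ∀ w v, P (DL w v) = DL w (P v) :=
    fun w v => congrArg (fun T : E →L[ℝ] E => T v) (hDL w)
  have h0 : ∀ b, (1 - P) b = b → P b = 0 := by
    intro b hb
    change b - P b = b at hb
    rwa [sub_eq_self] at hb
  refine eq_zero_of_intertwines (C := DL.flip a) (P := 1 - P) hpq.symm ?_ ?_ hq ?_ ?_ ?_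
  · rw [mul_sub, mul_one, sub_mul, one_mul, hPP, sub_self, sub_zero]
  · rw [mul_sub, sub_mul, mul_one, one_mul, hPL]
  · intro b hb
    have h5 := congrArg P (htor a b)
    simp only [map_add, map_sub, hPL', hDL', ha, h0 b hb, map_zero, sub_zero, add_zero] at h5
    exact (sub_eq_zero.1 h5).symm
  · intro b _
    have := congrArg (fun T : E →L[ℝ] E => T (DL b a)) hp
    change aeval L p (P (DL b a)) = 0 at this
    rwa [hDL', ha] at this
  · change b - P b = b
    rw [hb, sub_zero]

end PolynomialKernels

section SpectralProjection

variable {A : Type} [Ring A] [Algebra ℝ A]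

/-- The projection onto `ker p(a)` along `ker q(a)`, when `p`, `q` are coprime and
`(p q)(a) = 0`. -/
def spectralProj (a : A) (p q : ℝ[X]) : A := aeval a q * Ring.inverse (aeval a p + aeval a q)

theorem exists_aeval_inverse {a : A} {p q : ℝ[X]} (hpq : IsCoprime p q)
    (h0 : aeval a (p * q) = 0) : ∃ s : ℝ[X], aeval a ((p + q) * s) = 1 := by
  obtain ⟨u, v, huv⟩ := hpq
  refine ⟨u ^ 2 * p + v ^ 2 * q, ?_⟩
  have : (p + q) * (u ^ 2 * p + v ^ 2 * q)
      = (u * p + v * q) ^ 2 + (u - v) ^ 2 * (p * q) := by ring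
  rw [this, huv, map_add, map_mul, h0, mul_zero, add_zero, one_pow, map_one]

theorem isUnit_aeval_add {a : A} {p q : ℝ[X]} (hpq : IsCoprime p q)
    (h0 : aeval a (p * q) = 0) : IsUnit (aeval a p + aeval a q) := by
  obtain ⟨s, hs⟩ := exists_aeval_inverse hpq h0
  refine ⟨⟨_, aeval a s, ?_, ?_⟩, rfl⟩
  · rw [← map_add, ← map_mul, hs]
  · rw [← map_add, ← map_mul, mul_comm, hs]

theorem spectralProj_eq_aeval {a : A} {p q : ℝ[X]} (hpq : IsCoprime p q)
    (h0 : aeval a (p * q) = 0) :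
    ∃ s : ℝ[X], spectralProj a p q = aeval a (q * s) ∧ aeval a (p * s + q * s) = 1 := by
  obtain ⟨s, hs⟩ := exists_aeval_inverse hpq h0
  refine ⟨s, ?_, by rw [← add_mul, hs]⟩
  have h1 : Ring.inverse (aeval a p + aeval a q) = aeval a s := by
    have h2 := Ring.inverse_mul_cancel _ (isUnit_aeval_add hpq h0)
    calc _ = Ring.inverse (aeval a p + aeval a q) * aeval a ((p + q) * s) := by rw [hs, mul_one]
      _ = _ := by rw [map_mul, ← mul_assoc, map_add, h2, one_mul]
  rw [spectralProj, h1, map_mul]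

theorem aeval_mul_spectralProj {a : A} {p q : ℝ[X]} (hpq : IsCoprime p q)
    (h0 : aeval a (p * q) = 0) : aeval a p * spectralProj a p q = 0 := by
  obtain ⟨s, hs, -⟩ := spectralProj_eq_aeval hpq h0
  rw [hs, ← map_mul, ← mul_assoc, map_mul, h0, zero_mul]

theorem aeval_mul_one_sub_spectralProj {a : A} {p q : ℝ[X]} (hpq : IsCoprime p q)
    (h0 : aeval a (p * q) = 0) : aeval a q * (1 - spectralProj a p q) = 0 := by
  obtain ⟨s, hs, h1⟩ := spectralProj_eq_aeval hpq h0
  rw [hs, ← h1, ← map_sub, add_sub_cancel_right, ← map_mul,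
    show q * (p * s) = p * q * s by ring, map_mul, h0, zero_mul]

theorem spectralProj_commute {a : A} {p q : ℝ[X]} (hpq : IsCoprime p q)
    (h0 : aeval a (p * q) = 0) : spectralProj a p q * a = a * spectralProj a p q := by
  obtain ⟨s, hs, -⟩ := spectralProj_eq_aeval hpq h0
  have h : SemiconjBy a a a := rfl
  rw [hs]
  exact (h.aeval _).eq.symm

theorem spectralProj_mul_self {a : A} {p q : ℝ[X]} (hpq : IsCoprime p q)
    (h0 : aeval a (p * q) = 0) : spectralProj a p q * spectralProj a p q = spectralProj a p q := by
  obtain ⟨s, hs, h1⟩ := spectralProj_eq_aeval hpq h0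
  have h2 : aeval a (q * s) * aeval a (p * s + q * s) = aeval a (q * s) := by rw [h1, mul_one]
  rw [← map_mul, show q * s * (p * s + q * s) = p * q * s ^ 2 + q * s * (q * s) by ring,
    map_add, map_mul, h0, zero_mul, zero_add, map_mul] at h2
  rw [hs, h2]

end SpectralProjection

theorem contDiffOn_aeval {E A : Type} [NormedAddCommGroup E] [NormedSpace ℝ E] [NormedRing A]
    [NormedAlgebra ℝ A] {a : E → A} {p : E → ℝ[X]} {U : Set E} {d : ℕ}
    (ha : ContDiffOn ℝ ∞ a U) (hp : ∀ k, ContDiffOn ℝ ∞ (fun x => (p x).coeff k) U)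
    (hd : ∀ x ∈ U, (p x).natDegree < d) : ContDiffOn ℝ ∞ (fun x => aeval (a x) (p x)) U := by
  refine ContDiffOn.congr (f := fun x => ∑ k ∈ Finset.range d, (p x).coeff k • a x ^ k) ?_
    fun x hx => aeval_eq_sum_range' (hd x hx) _
  exact ContDiffOn.sum fun k _ => (hp k).smul (ha.pow k)

theorem contDiffOn_spectralProj {E A : Type} [NormedAddCommGroup E] [NormedSpace ℝ E]
    [NormedRing A] [NormedAlgebra ℝ A] [CompleteSpace A] {a : E → A} {p q : E → ℝ[X]} {U : Set E}
    {d : ℕ} (hU : IsOpen U) (ha : ContDiffOn ℝ ∞ a U)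
    (hp : ∀ k, ContDiffOn ℝ ∞ (fun x => (p x).coeff k) U)
    (hq : ∀ k, ContDiffOn ℝ ∞ (fun x => (q x).coeff k) U)
    (hpd : ∀ x ∈ U, (p x).natDegree < d) (hqd : ∀ x ∈ U, (q x).natDegree < d)
    (hpq : ∀ x ∈ U, IsCoprime (p x) (q x)) (h0 : ∀ x ∈ U, aeval (a x) (p x * q x) = 0) :
    ContDiffOn ℝ ∞ (fun x => spectralProj (a x) (p x) (q x)) U := by
  intro x hx
  have h1 := (contDiffOn_aeval ha hp hpd).contDiffAt (hU.mem_nhds hx)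
  have h2 := (contDiffOn_aeval ha hq hqd).contDiffAt (hU.mem_nhds hx)
  obtain ⟨w, hw⟩ := isUnit_aeval_add (hpq x hx) (h0 x hx)
  have h3 : ContDiffAt ℝ ∞ Ring.inverse (aeval (a x) (p x) + aeval (a x) (q x)) :=
    hw ▸ contDiffAt_ringInverse ℝ w
  exact (h2.mul (h3.comp x (h1.add h2))).contDiffWithinAt

theorem Matrix.aeval_eq_zero_of_charpoly_root {k : Type} [Fintype k] [DecidableEq k]
    {A : Matrix k k ℝ} {p : ℝ[X]} (hA : aeval A p = 0) {z : ℂ} (hz : aeval z A.charpoly = 0) :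
    aeval z p = 0 := by
  set B := A.map (algebraMap ℝ ℂ) with hB
  have h1 : z ∈ spectrum ℂ B := by
    rw [Matrix.mem_spectrum_iff_isRoot_charpoly, hB, Matrix.charpoly_map, IsRoot.def,
      eval_map_algebraMap, hz]
  have h2 := spectrum.subset_polynomial_aeval B (p.map (algebraMap ℝ ℂ)) ⟨z, h1, rfl⟩
  have h3 : aeval B (p.map (algebraMap ℝ ℂ)) = 0 := by
    rw [aeval_map_algebraMap]
    have h4 := aeval_algHom_apply (Algebra.ofId ℝ ℂ).mapMatrix A p
    rw [hA, map_zero] at h4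
    exact h4
  rw [h3] at h2
  by_contra hne
  refine h2 ?_
  rw [spectrum.mem_resolventSet_iff, sub_zero]
  refine (IsUnit.mk0 _ ?_).map (algebraMap ℂ (Matrix k k ℂ))
  change eval z (p.map (algebraMap ℝ ℂ)) ≠ 0
  rwa [eval_map_algebraMap]

theorem LinearMap.charpoly_isCoprime {E : Type} [AddCommGroup E] [Module ℝ E]
    [FiniteDimensional ℝ E] {f : Module.End ℝ E} {p q : ℝ[X]} (hpq : IsCoprime p q)
    (hf : aeval f p = 0) : IsCoprime f.charpoly q := by
  have hpq' := (Polynomial.isCoprime_iff_aeval_ne_zero_of_isAlgClosed ℝ ℂ p q).1 hpq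
  refine (Polynomial.isCoprime_iff_aeval_ne_zero_of_isAlgClosed ℝ ℂ _ q).2 fun z => ?_
  by_contra! h
  let b := Module.finBasis ℝ E
  have h1 : aeval (LinearMap.toMatrixAlgEquiv b f) p = 0 := by
    rw [← AlgEquiv.coe_toAlgHom, aeval_algHom_apply, hf, map_zero]
  have h2 : (LinearMap.toMatrixAlgEquiv b f).charpoly = f.charpoly := LinearMap.charpoly_toMatrix f b
  have h3 := Matrix.aeval_eq_zero_of_charpoly_root h1 (z := z) (by rw [h2]; exact h.1)
  rcases hpq' z with h4 | h4
  · exact h4 h3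
  · exact h4 h.2

theorem LinearMap.coe_aeval_restrict {E : Type} [AddCommGroup E] [Module ℝ E]
    {f : Module.End ℝ E} {V : Submodule ℝ E} (hV : ∀ x ∈ V, f x ∈ V) (p : ℝ[X]) (x : V) :
    ((aeval (f.restrict hV : Module.End ℝ V) p x : V) : E) = aeval f p x := by
  induction p using Polynomial.induction_on' with
  | add p q hp hq => simp [hp, hq]
  | monomial n c =>
    simp only [aeval_monomial, Module.End.mul_apply, Module.algebraMap_end_apply,
      Submodule.coe_smul]
    congr 1
    rw [Module.End.pow_restrict]
    rfl

theorem finrank_eq_natDegree_of_isCompl {E : Type} [AddCommGroup E] [Module ℝ E]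
    [FiniteDimensional ℝ E] {f : Module.End ℝ E} {p q : ℝ[X]} {V W : Submodule ℝ E}
    (hVW : IsCompl V W) (hfV : ∀ x ∈ V, f x ∈ V) (hfW : ∀ x ∈ W, f x ∈ W)
    (hpV : ∀ x ∈ V, aeval f p x = 0) (hqW : ∀ x ∈ W, aeval f q x = 0) (hpq : IsCoprime p q)
    (hf : f.charpoly = p * q) : Module.finrank ℝ V = p.natDegree := by
  let F : Module.End ℝ V := f.restrict hfV
  let G : Module.End ℝ W := f.restrict hfW
  let e := Submodule.prodEquivOfIsCompl V W hVW
  have he : F.prodMap G = e.symm.conj f := by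
    refine LinearMap.ext fun x => ?_
    rw [LinearEquiv.conj_apply_apply, LinearEquiv.symm_symm, LinearEquiv.eq_symm_apply]
    simp [e, F, G, map_add]
  have hchar : F.charpoly * G.charpoly = p * q := by
    rw [← LinearMap.charpoly_prodMap, he, LinearEquiv.charpoly_conj, hf]
  have hF : aeval F p = 0 := LinearMap.ext fun x => Subtype.ext <| by
    rw [LinearMap.coe_aeval_restrict hfV, hpV x x.2]; rfl
  have hG : aeval G q = 0 := LinearMap.ext fun x => Subtype.ext <| by
    rw [LinearMap.coe_aeval_restrict hfW, hqW x x.2]; rfl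
  have hpq0 : p * q ≠ 0 := hf ▸ f.charpoly_monic.ne_zero
  have hF' : F.charpoly ∣ p := (LinearMap.charpoly_isCoprime hpq hF).dvd_of_dvd_mul_right
    (Dvd.intro _ hchar)
  have hG' : G.charpoly ∣ q := (LinearMap.charpoly_isCoprime hpq.symm hG).dvd_of_dvd_mul_left
    (Dvd.intro_left _ hchar)
  have h1 := natDegree_le_of_dvd hF' (left_ne_zero_of_mul hpq0)
  have h2 := natDegree_le_of_dvd hG' (right_ne_zero_of_mul hpq0)
  have h3 := congrArg natDegree hchar
  rw [natDegree_mul (left_ne_zero_of_mul hpq0) (right_ne_zero_of_mul hpq0),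
    natDegree_mul F.charpoly_monic.ne_zero G.charpoly_monic.ne_zero] at h3
  rw [← LinearMap.charpoly_natDegree F]
  omega

section Coordinates

variable {E : Type} [NormedAddCommGroup E] [NormedSpace ℝ E]

/-- Vanishing of the Nijenhuis torsion is invariant under a change of coordinates. -/
theorem torsion_eq_zero_of_conj {L Λ : E → E →L[ℝ] E} {Ψ : E → E}
    {W : Set E} (hW : IsOpen W) (hΨ : ContDiffOn ℝ ∞ Ψ W) (hΛ : ContDiffOn ℝ ∞ Λ W)
    (hconj : ∀ z ∈ W, fderiv ℝ Ψ z * Λ z = L (Ψ z) * fderiv ℝ Ψ z) {z : E} (hz : z ∈ W)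
    (hL : DifferentiableAt ℝ L (Ψ z)) (hinj : Function.Injective (fderiv ℝ Ψ z))
    (htor : ∀ u v, L (Ψ z) (fderiv ℝ L (Ψ z) v u) - L (Ψ z) (fderiv ℝ L (Ψ z) u v)
      + fderiv ℝ L (Ψ z) (L (Ψ z) u) v - fderiv ℝ L (Ψ z) (L (Ψ z) v) u = 0) (u v : E) :
    Λ z (fderiv ℝ Λ z v u) - Λ z (fderiv ℝ Λ z u v)
      + fderiv ℝ Λ z (Λ z u) v - fderiv ℝ Λ z (Λ z v) u = 0 := by
  have hΨz := hΨ.contDiffAt (hW.mem_nhds hz)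
  have hsymm : IsSymmSndFDerivAt ℝ Ψ z := hΨz.isSymmSndFDerivAt (by
    rw [minSmoothness_of_isRCLikeNormedField]
    exact WithTop.coe_le_coe.2 (le_top : (2 : ℕ∞) ≤ ⊤))
  have hJ : HasFDerivAt (fderiv ℝ Ψ) (fderiv ℝ (fderiv ℝ Ψ) z) z :=
    ((hΨz.fderiv_right (m := 1) (by norm_cast)).differentiableAt (by simp)).hasFDerivAt
  have hΛz : HasFDerivAt Λ (fderiv ℝ Λ z) z :=
    ((hΛ.contDiffAt (hW.mem_nhds hz)).differentiableAt (by simp)).hasFDerivAt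
  have hLΨ : HasFDerivAt (fun z => L (Ψ z)) (fderiv ℝ L (Ψ z) ∘L fderiv ℝ Ψ z) z :=
    hL.hasFDerivAt.comp z (hΨz.differentiableAt (by simp)).hasFDerivAt
  have hev : (fun z => fderiv ℝ Ψ z * Λ z) =ᶠ[𝓝 z] fun z => L (Ψ z) * fderiv ℝ Ψ z :=
    eventually_of_mem (hW.mem_nhds hz) hconj
  set J := fderiv ℝ Ψ z
  set S := fderiv ℝ (fderiv ℝ Ψ) z
  have hd : ∀ a b, J (fderiv ℝ Λ z a b) + S a (Λ z b)
      = L (Ψ z) (S a b) + fderiv ℝ L (Ψ z) (J a) (J b) := fun a b =>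
    congrArg (fun T : E →L[ℝ] E →L[ℝ] E => T a b)
      ((hJ.clm_comp hΛz).unique ((hLΨ.clm_comp hJ).congr_of_eventuallyEq hev))
  have hd' : ∀ a b, J (fderiv ℝ Λ z a b)
      = L (Ψ z) (S a b) + fderiv ℝ L (Ψ z) (J a) (J b) - S a (Λ z b) :=
    fun a b => eq_sub_of_add_eq (hd a b)
  have hJΛ : ∀ a, J (Λ z a) = L (Ψ z) (J a) :=
    fun a => congrArg (fun T : E →L[ℝ] E => T a) (hconj z hz)
  apply hinj
  simp only [map_add, map_sub, hJΛ, hd', map_zero]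
  rw [hsymm u v, hsymm (Λ z u) v, hsymm (Λ z v) u, hsymm (Λ z v) (Λ z u), ← htor (J u) (J v)]
  abel

/-- A smooth family of projections with integrable range and kernel is constant in suitable
local coordinates. -/
theorem exists_adapted_coordinates [FiniteDimensional ℝ E] {P : E → E →L[ℝ] E} {U : Set E}
    (hU : IsOpen U) (hP : ContDiffOn ℝ ∞ P U) (hproj : ∀ z ∈ U, P z * P z = P z)
    (hinv : ∀ z ∈ U, ∀ u v, P z u = u → P z v = v → fderiv ℝ P z u v = fderiv ℝ P z v u)
    (hinv' : ∀ z ∈ U, ∀ u v, P z u = 0 → P z v = 0 → fderiv ℝ P z u v = fderiv ℝ P z v u)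
    {p : E} (hp : p ∈ U) (T : E ≃L[ℝ] E) {Q : E →L[ℝ] E}
    (hT : (T : E →L[ℝ] E) * P p = Q * (T : E →L[ℝ] E)) :
    ∃ e : OpenPartialHomeomorph E E, p ∈ e.source ∧ e.source ⊆ U ∧
      ContDiffOn ℝ ∞ e e.source ∧ ContDiffOn ℝ ∞ e.symm e.target ∧
      ∀ x ∈ e.source, ∃ g : E ≃L[ℝ] E, HasFDerivAt e (g : E →L[ℝ] E) x ∧
        (g : E →L[ℝ] E) * P x = Q * (g : E →L[ℝ] E) := by
  obtain ⟨f, V, hV, hpV, hVU, hf, hfP, hPf, hfp⟩ := exists_first_integrals hU hP hproj hinv hp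
  have hQsm : ContDiffOn ℝ ∞ (fun z => 1 - P z) U := contDiffOn_const.sub hP
  have hQd : ∀ z, fderiv ℝ (fun z => 1 - P z) z = - fderiv ℝ P z := fun z => by
    rw [fderiv_const_sub]
  obtain ⟨f', V', hV', hpV', -, hf', hfP', hPf', hfp'⟩ :=
    exists_first_integrals (P := fun z => 1 - P z) hU hQsm
    (fun z hz => by
      rw [mul_sub, mul_one, sub_mul, one_mul, hproj z hz, sub_self, sub_zero])
    (fun z hz u v hu hv => by
      change u - P z u = u at hu
      change v - P z v = v at hv
      rw [hQd]
      change - fderiv ℝ P z u v = - fderiv ℝ P z v u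
      rw [hinv' z hz u v (sub_eq_self.1 hu) (sub_eq_self.1 hv)]) hp
  have hsm : ContDiffOn ℝ ∞ (fun z => T (f z + f' z)) (V ∩ V') :=
    (T : E →L[ℝ] E).contDiff.comp_contDiffOn
      ((hf.mono Set.inter_subset_left).add (hf'.mono Set.inter_subset_right))
  have hd : ∀ z ∈ V ∩ V', HasFDerivAt (fun z => T (f z + f' z))
      ((T : E →L[ℝ] E) * (fderiv ℝ f z + fderiv ℝ f' z)) z := by
    intro z hz
    have h1 := ((hf.contDiffAt (hV.mem_nhds hz.1)).differentiableAt (by simp)).hasFDerivAt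
    have h2 := ((hf'.contDiffAt (hV'.mem_nhds hz.2)).differentiableAt (by simp)).hasFDerivAt
    exact (T : E →L[ℝ] E).hasFDerivAt.comp z (h1.add h2)
  have hdp : HasFDerivAt (fun z => T (f z + f' z)) (T : E →L[ℝ] E) p := by
    convert hd p ⟨hpV, hpV'⟩ using 1
    rw [hfp, hfp', sub_sub_cancel, sub_add_cancel, mul_one]
  obtain ⟨e, hpe, heV, hef, hesm, hed⟩ :=
    exists_local_diffeo (hV.inter hV') hsm ⟨hpV, hpV'⟩ T hdp
  have hee : (e : E → E) = fun z => T (f z + f' z) := funext hef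
  refine ⟨e, hpe, heV.trans (Set.inter_subset_left.trans hVU), ?_, hesm, fun x hx => ?_⟩
  · rw [hee]
    exact hsm.mono heV
  · obtain ⟨g, hg⟩ := hed x hx
    refine ⟨g, by rw [hee]; exact hg, ?_⟩
    rw [hg.unique (hd x (heV hx))]
    have h1 := hfP x (heV hx).1
    have h2 := hPf x (heV hx).1
    have h3 : fderiv ℝ f' x * (1 - P x) = 0 := hfP' x (heV hx).2
    have h4 : (1 - P p) * fderiv ℝ f' x = 0 := hPf' x (heV hx).2
    rw [mul_sub, mul_one, sub_eq_zero] at h3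
    rw [sub_mul, one_mul, sub_eq_zero] at h4
    rw [mul_assoc, add_mul, h1, zero_add, ← h3, ← mul_assoc, ← hT, mul_assoc, mul_add, h2, zero_add,
      ← h4]

end Coordinates

section Operators

variable {E : Type} [NormedAddCommGroup E] [NormedSpace ℝ E]

theorem aeval_apply_eq_zero_iff {L P : E →L[ℝ] E} {p q : ℝ[X]} (hpq : IsCoprime p q)
    (hp : aeval L p * P = 0) (hq : aeval L q * (1 - P) = 0) {w : E} :
    aeval L p w = 0 ↔ P w = w := by
  have h1 : aeval L p (P w) = 0 := congrArg (fun T : E →L[ℝ] E => T w) hp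
  have h2 : aeval L q (w - P w) = 0 := congrArg (fun T : E →L[ℝ] E => T w) hq
  refine ⟨fun h => ?_, fun h => by rwa [h] at h1⟩
  have h3 : aeval L p (w - P w) = 0 := by rw [map_sub, h, h1, sub_zero]
  exact (sub_eq_zero.1 (eq_zero_of_aeval_apply_eq_zero hpq h3 h2)).symm

theorem aeval_apply_eq_zero_iff' {L P : E →L[ℝ] E} {p q : ℝ[X]} (hpq : IsCoprime p q)
    (hp : aeval L p * P = 0) (hq : aeval L q * (1 - P) = 0) {w : E} :
    aeval L q w = 0 ↔ P w = 0 := by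
  rw [aeval_apply_eq_zero_iff (P := 1 - P) hpq.symm hq (by rwa [sub_sub_cancel])]
  exact sub_eq_self

theorem spectralProj_swap {L : E →L[ℝ] E} {p q : ℝ[X]} (hpq : IsCoprime p q)
    (h0 : aeval L (p * q) = 0) : spectralProj L q p = 1 - spectralProj L p q := by
  rw [eq_sub_iff_add_eq, spectralProj, spectralProj, add_comm (aeval L q) (aeval L p), ← add_mul]
  exact Ring.mul_inverse_cancel _ (isUnit_aeval_add hpq h0)

/-- The spectral projections of a Nijenhuis operator have integrable range. -/
theorem fderiv_spectralProj_symm {L : E → E →L[ℝ] E} {p q : E → ℝ[X]}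
    {U : Set E} (hU : IsOpen U) (hL : ContDiffOn ℝ ∞ L U)
    (hP : ContDiffOn ℝ ∞ (fun x => spectralProj (L x) (p x) (q x)) U)
    (hpq : ∀ x ∈ U, IsCoprime (p x) (q x)) (h0 : ∀ x ∈ U, aeval (L x) (p x * q x) = 0)
    {x : E} (hx : x ∈ U)
    (htor : ∀ u v, L x (fderiv ℝ L x v u) - L x (fderiv ℝ L x u v)
      + fderiv ℝ L x (L x u) v - fderiv ℝ L x (L x v) u = 0)
    {u v : E} (hu : spectralProj (L x) (p x) (q x) u = u)
    (hv : spectralProj (L x) (p x) (q x) v = v) :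
    fderiv ℝ (fun x => spectralProj (L x) (p x) (q x)) x u v
      = fderiv ℝ (fun x => spectralProj (L x) (p x) (q x)) x v u := by
  set P : E → E →L[ℝ] E := fun x => spectralProj (L x) (p x) (q x) with hPdef
  have hPd : HasFDerivAt P (fderiv ℝ P x) x :=
    ((hP.contDiffAt (hU.mem_nhds hx)).differentiableAt (by simp)).hasFDerivAt
  have hLd : HasFDerivAt L (fderiv ℝ L x) x :=
    ((hL.contDiffAt (hU.mem_nhds hx)).differentiableAt (by simp)).hasFDerivAt
  have e1 : (fun x => P x * P x) =ᶠ[𝓝 x] P :=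
    eventually_of_mem (hU.mem_nhds hx) fun y hy => spectralProj_mul_self (hpq y hy) (h0 y hy)
  have e2 : (fun x => P x * L x) =ᶠ[𝓝 x] fun x => L x * P x :=
    eventually_of_mem (hU.mem_nhds hx) fun y hy => spectralProj_commute (hpq y hy) (h0 y hy)
  refine projection_deriv_symm (hpq x hx) (spectralProj_mul_self (hpq x hx) (h0 x hx))
    (spectralProj_commute (hpq x hx) (h0 x hx)) (aeval_mul_spectralProj (hpq x hx) (h0 x hx))
    (aeval_mul_one_sub_spectralProj (hpq x hx) (h0 x hx)) (fun w => ?_) (fun w => ?_) htor hu hv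
  · rw [add_comm]
    exact congrArg (fun T : E →L[ℝ] E →L[ℝ] E => T w)
      ((hPd.clm_comp hPd).unique (hPd.congr_of_eventuallyEq e1))
  · rw [add_comm, add_comm (fderiv ℝ L x w * _)]
    exact congrArg (fun T : E →L[ℝ] E →L[ℝ] E => T w)
      ((hPd.clm_comp hLd).unique ((hLd.clm_comp hPd).congr_of_eventuallyEq e2))

/-- The bracket of two sections of the range of a family of projections is a section again. -/
theorem projection_apply_bracket {P : E → E →L[ℝ] E} {U : Set E} (hU : IsOpen U)
    (hP : ContDiffOn ℝ ∞ P U) {x : E} (hx : x ∈ U)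
    (hinv : ∀ u v, P x u = u → P x v = v → fderiv ℝ P x u v = fderiv ℝ P x v u) {u v : E → E}
    (hu : ContDiffOn ℝ ∞ u U) (hv : ContDiffOn ℝ ∞ v U) (hPu : ∀ y ∈ U, P y (u y) = u y)
    (hPv : ∀ y ∈ U, P y (v y) = v y) :
    P x (fderiv ℝ v x (u x) - fderiv ℝ u x (v x)) = fderiv ℝ v x (u x) - fderiv ℝ u x (v x) := by
  have hPd : HasFDerivAt P (fderiv ℝ P x) x :=
    ((hP.contDiffAt (hU.mem_nhds hx)).differentiableAt (by simp)).hasFDerivAt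
  have key : ∀ s : E → E, ContDiffOn ℝ ∞ s U → (∀ y ∈ U, P y (s y) = s y) → ∀ w,
      P x (fderiv ℝ s x w) + fderiv ℝ P x w (s x) = fderiv ℝ s x w := by
    intro s hs hPs w
    have hsd : HasFDerivAt s (fderiv ℝ s x) x :=
      ((hs.contDiffAt (hU.mem_nhds hx)).differentiableAt (by simp)).hasFDerivAt
    have e : (fun y => P y (s y)) =ᶠ[𝓝 x] s := eventually_of_mem (hU.mem_nhds hx) hPs
    exact congrArg (fun T : E →L[ℝ] E => T w)
      ((hPd.clm_apply hsd).unique (hsd.congr_of_eventuallyEq e))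
  rw [map_sub, eq_sub_of_add_eq (key v hv hPv (u x)), eq_sub_of_add_eq (key u hu hPu (v x)),
    hinv (u x) (v x) (hPu x hx) (hPv x hx)]
  abel

/-- In coordinates in which the spectral projection `P` of a Nijenhuis operator `L` becomes a
constant projection `Q`, the operator splits into blocks depending on separate variables. -/
theorem splitting_in_coordinates {L Λ P : E → E →L[ℝ] E} {Q : E →L[ℝ] E} {p q : E → ℝ[X]}
    {U : Set E} (hU : IsOpen U) (hL : ContDiffOn ℝ ∞ L U)
    (htor : ∀ x ∈ U, ∀ u v, L x (fderiv ℝ L x v u) - L x (fderiv ℝ L x u v)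
      + fderiv ℝ L x (L x u) v - fderiv ℝ L x (L x v) u = 0)
    (hpq : ∀ x ∈ U, IsCoprime (p x) (q x)) (hPL : ∀ x ∈ U, P x * L x = L x * P x)
    (hp : ∀ x ∈ U, aeval (L x) (p x) * P x = 0)
    (hq : ∀ x ∈ U, aeval (L x) (q x) * (1 - P x) = 0) (hQ : Q * Q = Q)
    (e : OpenPartialHomeomorph E E) (heU : e.source ⊆ U) (he : ContDiffOn ℝ ∞ e e.source)
    (hes : ContDiffOn ℝ ∞ e.symm e.target)
    (heP : ∀ x ∈ e.source, ∃ g : E ≃L[ℝ] E, HasFDerivAt e (g : E →L[ℝ] E) x ∧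
      (g : E →L[ℝ] E) * P x = Q * (g : E →L[ℝ] E))
    (hΛ : ∀ z ∈ e.target, Λ z = fderiv ℝ e (e.symm z) * L (e.symm z) * fderiv ℝ e.symm z)
    {z : E} (hz : z ∈ e.target) :
    DifferentiableAt ℝ Λ z ∧ Q * Λ z = Λ z * Q ∧ aeval (Λ z) (p (e.symm z)) * Q = 0 ∧
      aeval (Λ z) (q (e.symm z)) * (1 - Q) = 0 ∧
      (∀ a b, Q a = a → Q b = 0 → fderiv ℝ Λ z b a = 0) ∧
      ∀ a b, Q a = 0 → Q b = b → fderiv ℝ Λ z b a = 0 := by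
  have hsrc : ∀ z ∈ e.target, e.symm z ∈ e.source := fun z hz => e.map_target hz
  have hsm : ContDiffOn ℝ ∞ Λ e.target := by
    have h1 : ContDiffOn ℝ ∞ (fun z => fderiv ℝ e (e.symm z)) e.target :=
      (he.fderiv_of_isOpen (m := ∞) e.open_source (by simp)).comp hes hsrc
    have h2 : ContDiffOn ℝ ∞ (fun z => L (e.symm z)) e.target :=
      hL.comp hes fun z hz => heU (hsrc z hz)
    have h3 : ContDiffOn ℝ ∞ (fderiv ℝ e.symm) e.target :=
      hes.fderiv_of_isOpen (m := ∞) e.open_target (by simp)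
    exact ((h1.mul h2).mul h3).congr hΛ
  have hg : ∀ z ∈ e.target, ∃ g g' : E →L[ℝ] E, g * g' = 1 ∧ g' * g = 1 ∧
      fderiv ℝ e.symm z = g' ∧ Λ z = g * L (e.symm z) * g' ∧ g * P (e.symm z) = Q * g := by
    intro z hz
    obtain ⟨g, hg, hgP⟩ := heP _ (hsrc z hz)
    have hgs : fderiv ℝ e.symm z = (g.symm : E →L[ℝ] E) := (e.hasFDerivAt_symm hz hg).fderiv
    refine ⟨g, g.symm, ?_, ?_, hgs, ?_, hgP⟩
    · ext v; exact g.apply_symm_apply v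
    · ext v; exact g.symm_apply_apply v
    · rw [hΛ z hz, hg.fderiv, hgs]
  have hcomm : ∀ z ∈ e.target, Q * Λ z = Λ z * Q := by
    intro z hz
    obtain ⟨g, g', h1, h2, -, h4, h5⟩ := hg z hz
    have h6 : P (e.symm z) * g' = g' * Q := by
      calc P (e.symm z) * g' = g' * (g * P (e.symm z)) * g' := by rw [← mul_assoc, h2, one_mul]
        _ = g' * Q := by rw [h5, mul_assoc, mul_assoc, h1, mul_one]
    rw [h4, ← mul_assoc, ← mul_assoc, ← h5, mul_assoc g, hPL _ (heU (hsrc z hz)), ← mul_assoc,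
      mul_assoc _ _ g', h6, mul_assoc _ g' Q]
  have htorΛ := torsion_eq_zero_of_conj (L := L) e.open_target hes hsm (fun z hz => by
    obtain ⟨g, g', h1, h2, h3, h4, h5⟩ := hg z hz
    rw [h3, h4, ← mul_assoc, ← mul_assoc, h2, one_mul]) hz
    ((hL.contDiffAt (hU.mem_nhds (heU (hsrc z hz)))).differentiableAt (by simp))
    (by
      obtain ⟨g, g', h1, h2, h3, -⟩ := hg z hz
      rw [h3]
      exact Function.LeftInverse.injective (g := g)
        fun v => congrArg (fun T : E →L[ℝ] E => T v) h1)
    (htor _ (heU (hsrc z hz)))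
  have hd : HasFDerivAt Λ (fderiv ℝ Λ z) z :=
    ((hsm.contDiffAt (e.open_target.mem_nhds hz)).differentiableAt (by simp)).hasFDerivAt
  have hDΛ : ∀ w, Q * fderiv ℝ Λ z w = fderiv ℝ Λ z w * Q := by
    intro w
    have e1 : (fun z => Q * Λ z) =ᶠ[𝓝 z] fun z => Λ z * Q :=
      eventually_of_mem (e.open_target.mem_nhds hz) hcomm
    have h := ((hasFDerivAt_const Q z).clm_comp hd).unique
      ((hd.clm_comp (hasFDerivAt_const Q z)).congr_of_eventuallyEq e1)
    refine ContinuousLinearMap.ext fun v => ?_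
    simpa using congrArg (fun T : E →L[ℝ] E →L[ℝ] E => T w v) h
  obtain ⟨g, g', h1, h2, -, h4, h5⟩ := hg z hz
  have hsemi : SemiconjBy g (L (e.symm z)) (Λ z) := by
    change _ * _ = _ * _
    rw [h4, mul_assoc, h2, mul_one]
  have hxU := heU (hsrc z hz)
  have hpQ : aeval (Λ z) (p (e.symm z)) * Q = 0 := by
    have h6 : Q = g * P (e.symm z) * g' := by rw [h5, mul_assoc, h1, mul_one]
    rw [h6, ← mul_assoc, ← mul_assoc, ← (hsemi.aeval _).eq, mul_assoc g, hp _ hxU, mul_zero,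
      zero_mul]
  have hqQ : aeval (Λ z) (q (e.symm z)) * (1 - Q) = 0 := by
    have h6 : 1 - Q = g * (1 - P (e.symm z)) * g' := by
      rw [mul_sub, h5, mul_one, sub_mul, mul_assoc, h1, mul_one]
    rw [h6, ← mul_assoc, ← mul_assoc, ← (hsemi.aeval _).eq, mul_assoc g, hq _ hxU, mul_zero,
      zero_mul]
  refine ⟨hd.differentiableAt, hcomm z hz, hpQ, hqQ, fun a b ha hb => ?_, fun a b ha hb => ?_⟩
  · exact block_deriv_eq_zero (hpq _ hxU) hQ (hcomm z hz) hpQ hqQ hDΛ htorΛ ha hb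
  · refine block_deriv_eq_zero (P := 1 - Q) (hpq _ hxU).symm ?_ ?_ hqQ (by rwa [sub_sub_cancel]) ?_
      htorΛ ?_ ?_
    · rw [mul_sub, mul_one, sub_mul, one_mul, hQ, sub_self, sub_zero]
    · rw [mul_sub, mul_one, sub_mul, one_mul, hcomm z hz]
    · intro w
      rw [mul_sub, mul_one, sub_mul, one_mul, hDΛ]
    · change a - Q a = a
      rw [ha, sub_zero]
    · change b - Q b = 0
      rw [hb, sub_self]

end Operators

section MatrixOperators

/-- Square matrices as continuous linear operators. -/
def matOp (n : ℕ) : Matrix (Fin n) (Fin n) ℝ ≃ₐ[ℝ] ((Fin n → ℝ) →L[ℝ] (Fin n → ℝ)) :=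
  Matrix.toLinAlgEquiv'.trans (Module.End.toContinuousLinearMap (Fin n → ℝ))

theorem matOp_apply {n : ℕ} (A : Matrix (Fin n) (Fin n) ℝ) (v : Fin n → ℝ) :
    matOp n A v = A *ᵥ v := rfl

theorem matOp_single {n : ℕ} (A : Matrix (Fin n) (Fin n) ℝ) (i j : Fin n) :
    matOp n A (Pi.single j 1) i = A i j := by
  rw [matOp_apply, Matrix.mulVec_single_one]
  rfl

theorem matOp_aeval {n : ℕ} (A : Matrix (Fin n) (Fin n) ℝ) (p : ℝ[X]) :
    matOp n (aeval A p) = aeval (matOp n A) p :=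
  (aeval_algHom_apply (matOp n).toAlgHom A p).symm

theorem mem_ker_mulVecLin_aeval {n : ℕ} {A : Matrix (Fin n) (Fin n) ℝ} {p : ℝ[X]}
    {w : Fin n → ℝ} :
    w ∈ LinearMap.ker (Matrix.mulVecLin (aeval A p)) ↔ aeval (matOp n A) p w = 0 := by
  rw [← matOp_aeval]
  exact Iff.rfl

theorem contDiffOn_matOp {n : ℕ} {U : Set (Fin n → ℝ)}
    {L : (Fin n → ℝ) → Matrix (Fin n) (Fin n) ℝ}
    (hL : ∀ i j, ContDiffOn ℝ ∞ (fun x => L x i j) U) :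
    ContDiffOn ℝ ∞ (fun x => matOp n (L x)) U := by
  let Λ : (Fin n → Fin n → ℝ) →L[ℝ] (Fin n → ℝ) →L[ℝ] (Fin n → ℝ) :=
    LinearMap.toContinuousLinearMap
      ((matOp n).toLinearMap ∘ₗ (Matrix.ofLinearEquiv ℝ).toLinearMap)
  exact Λ.contDiff.comp_contDiffOn (f := fun x i j => L x i j)
    (contDiffOn_pi.2 fun i => contDiffOn_pi.2 fun j => hL i j)

theorem matOp_jac {n : ℕ} {Φ : (Fin n → ℝ) → Fin n → ℝ} {x : Fin n → ℝ}
    (hΦ : DifferentiableAt ℝ Φ x) : matOp n (jac Φ x) = fderiv ℝ Φ x := by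
  refine ContinuousLinearMap.coe_injective (LinearMap.pi_ext' fun j => LinearMap.ext_ring ?_)
  funext i
  change matOp n (jac Φ x) (Pi.single j 1) i = fderiv ℝ Φ x (Pi.single j 1) i
  rw [matOp_single]
  change fderiv ℝ (fun y => Φ y i) x (Pi.single j 1) = _
  rw [fderiv_apply hΦ i]
  rfl

theorem pd_entry_eq {n : ℕ} {A : (Fin n → ℝ) → Matrix (Fin n) (Fin n) ℝ} {z : Fin n → ℝ}
    (hA : DifferentiableAt ℝ (fun w => matOp n (A w)) z) (i j m : Fin n) :
    pd m (fun w => A w i j) z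
      = fderiv ℝ (fun w => matOp n (A w)) z (Pi.single m 1) (Pi.single j 1) i := by
  have h : HasFDerivAt (fun w => matOp n (A w) (Pi.single j 1) i)
      (ContinuousLinearMap.proj (R := ℝ) (φ := fun _ : Fin n => ℝ) i ∘L
        ContinuousLinearMap.apply ℝ (Fin n → ℝ) (Pi.single j 1 : Fin n → ℝ) ∘L
          fderiv ℝ (fun w => matOp n (A w)) z) z :=
    (ContinuousLinearMap.proj (R := ℝ) (φ := fun _ : Fin n => ℝ) i).hasFDerivAt.comp z
      ((ContinuousLinearMap.apply ℝ (Fin n → ℝ)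
        (Pi.single j 1 : Fin n → ℝ)).hasFDerivAt.comp z hA.hasFDerivAt)
  simp only [matOp_single] at h
  rw [pd, h.fderiv]
  rfl

theorem torsion_of_nijenhuisZero {n : ℕ} {U : Set (Fin n → ℝ)}
    {L : (Fin n → ℝ) → Matrix (Fin n) (Fin n) ℝ} (hNL : NijenhuisZero L U) {x : Fin n → ℝ}
    (hx : x ∈ U) (hL : DifferentiableAt ℝ (fun x => matOp n (L x)) x) (u v : Fin n → ℝ) :
    matOp n (L x) (fderiv ℝ (fun x => matOp n (L x)) x v u)
      - matOp n (L x) (fderiv ℝ (fun x => matOp n (L x)) x u v)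
      + fderiv ℝ (fun x => matOp n (L x)) x (matOp n (L x) u) v
      - fderiv ℝ (fun x => matOp n (L x)) x (matOp n (L x) v) u = 0 := by
  have h := hNL (fun _ => u) (fun _ => v) contDiff_const contDiff_const x hx
  have hd : ∀ w a, fderiv ℝ (appT L fun _ => w) x a
      = fderiv ℝ (fun x => matOp n (L x)) x a w := fun w a =>
    congrArg (fun T : (Fin n → ℝ) →L[ℝ] (Fin n → ℝ) => T a)
      ((ContinuousLinearMap.apply ℝ (Fin n → ℝ) w).hasFDerivAt.comp x hL.hasFDerivAt).fderiv
  have hc : ∀ w : Fin n → ℝ, fderiv ℝ (fun _ : Fin n → ℝ => w) x = 0 := fun w =>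
    (hasFDerivAt_const w x).fderiv
  simp only [nijenhuis, vbracket, hd, hc, ← matOp_apply, _root_.zero_apply, sub_zero, zero_sub, map_zero,
    map_neg, sub_neg_eq_add, zero_add] at h
  rw [← h]
  simp only [appT, ← matOp_apply]
  abel

theorem mem_span_single_iff {n : ℕ} {S : Fin n → Prop} {w : Fin n → ℝ} :
    w ∈ Submodule.span ℝ {e : Fin n → ℝ | ∃ i : Fin n, S i ∧ e = Pi.single i 1} ↔
      ∀ i, ¬ S i → w i = 0 := by
  constructor
  · intro hw i hi
    induction hw using Submodule.span_induction with
    | mem e he =>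
      obtain ⟨j, hj, rfl⟩ := he
      exact Pi.single_eq_of_ne (fun h : i = j => hi (h ▸ hj)) 1
    | zero => rfl
    | add u v _ _ hu hv => rw [Pi.add_apply, hu, hv, add_zero]
    | smul c u _ hu => rw [Pi.smul_apply, hu, smul_zero]
  · intro hw
    rw [pi_eq_sum_univ' w]
    refine Submodule.sum_mem _ fun i _ => ?_
    by_cases hi : S i
    · exact Submodule.smul_mem _ _ (Submodule.subset_span ⟨i, hi, by
        funext k; simp [Pi.single_apply, eq_comm]⟩)
    · rw [hw i hi, zero_smul]
      exact Submodule.zero_mem _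

/-- The projection onto the first `r` coordinates. -/
def coordProj (n r : ℕ) : (Fin n → ℝ) →L[ℝ] (Fin n → ℝ) :=
  matOp n (Matrix.diagonal fun i => if (i : ℕ) < r then 1 else 0)

theorem coordProj_apply {n r : ℕ} (v : Fin n → ℝ) (i : Fin n) :
    coordProj n r v i = if (i : ℕ) < r then v i else 0 := by
  rw [coordProj, matOp_apply, Matrix.mulVec_diagonal]
  split_ifs <;> simp

theorem coordProj_mul_self (n r : ℕ) : coordProj n r * coordProj n r = coordProj n r := by
  refine ContinuousLinearMap.ext fun v => funext fun i => ?_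
  change coordProj n r (coordProj n r v) i = _
  simp only [coordProj_apply]
  split_ifs <;> rfl

theorem coordProj_single_of_lt {n r : ℕ} {i : Fin n} (hi : (i : ℕ) < r) :
    coordProj n r (Pi.single i 1) = Pi.single i 1 := by
  funext k
  rw [coordProj_apply]
  split_ifs with h
  · rfl
  · have hk : k ≠ i := fun hk => h (hk ▸ hi)
    rw [Pi.single_eq_of_ne hk]

theorem coordProj_single_of_le {n r : ℕ} {i : Fin n} (hi : r ≤ (i : ℕ)) :
    coordProj n r (Pi.single i 1) = 0 := by
  funext k
  rw [coordProj_apply]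
  split_ifs with h
  · exact Pi.single_eq_of_ne (fun hk : k = i => (hk ▸ h).not_ge hi) 1
  · rfl

theorem mem_coordSpan {n r : ℕ} {w : Fin n → ℝ} :
    w ∈ coordSpan n r ↔ coordProj n r w = w := by
  rw [coordSpan, mem_span_single_iff, funext_iff]
  refine forall_congr' fun i => ?_
  rw [coordProj_apply]
  split_ifs with h <;> simp [h, eq_comm]

theorem mem_coordSpan' {n r : ℕ} {w : Fin n → ℝ} :
    w ∈ coordSpan' n r ↔ coordProj n r w = 0 := by
  rw [coordSpan', mem_span_single_iff, funext_iff]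
  refine forall_congr' fun i => ?_
  rw [coordProj_apply]
  split_ifs with h <;> simp [h]

theorem finrank_range_coordProj {n r : ℕ} (hr : r ≤ n) :
    Module.finrank ℝ (LinearMap.range (coordProj n r : (Fin n → ℝ) →ₗ[ℝ] (Fin n → ℝ))) = r := by
  have h := Matrix.rank_diagonal (fun i : Fin n => if (i : ℕ) < r then (1 : ℝ) else 0)
  have h2 : Fintype.card {i : Fin n // (if (i : ℕ) < r then (1 : ℝ) else 0) ≠ 0} = r := by
    have : Fintype.card {i : Fin n // (i : ℕ) < r} = r := by
      rw [Fintype.card_subtype, Fin.card_filter_val_lt, min_eq_right hr]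
    exact (Fintype.card_congr (Equiv.subtypeEquivRight fun i => by simp)).trans this
  rw [h2] at h
  exact h

end MatrixOperators

/-- Idempotents of the same rank are conjugate. -/
theorem exists_conj_of_finrank_range_eq {E : Type} [NormedAddCommGroup E] [NormedSpace ℝ E]
    [FiniteDimensional ℝ E] {P Q : E →L[ℝ] E} (hP : P * P = P) (hQ : Q * Q = Q)
    (h : Module.finrank ℝ (LinearMap.range (P : E →ₗ[ℝ] E))
      = Module.finrank ℝ (LinearMap.range (Q : E →ₗ[ℝ] E))) :
    ∃ T : E ≃L[ℝ] E, (T : E →L[ℝ] E) * P = Q * (T : E →L[ℝ] E) := by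
  have hc : ∀ R : E →L[ℝ] E, R * R = R →
      IsCompl (LinearMap.range (R : E →ₗ[ℝ] E)) (LinearMap.ker (R : E →ₗ[ℝ] E)) := fun R hR =>
    LinearMap.IsIdempotentElem.isCompl (by
      change (R : E →ₗ[ℝ] E) * (R : E →ₗ[ℝ] E) = R
      exact congrArg (fun T : E →L[ℝ] E => (T : E →ₗ[ℝ] E)) hR)
  have hk : Module.finrank ℝ (LinearMap.ker (P : E →ₗ[ℝ] E))
      = Module.finrank ℝ (LinearMap.ker (Q : E →ₗ[ℝ] E)) := by
    have h1 := LinearMap.finrank_range_add_finrank_ker (P : E →ₗ[ℝ] E)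
    have h2 := LinearMap.finrank_range_add_finrank_ker (Q : E →ₗ[ℝ] E)
    omega
  let a := LinearEquiv.ofFinrankEq _ _ h
  let b := LinearEquiv.ofFinrankEq _ _ hk
  let eP := Submodule.prodEquivOfIsCompl _ _ (hc P hP)
  let eQ := Submodule.prodEquivOfIsCompl _ _ (hc Q hQ)
  let T : E ≃ₗ[ℝ] E := eP.symm ≪≫ₗ (a.prodCongr b) ≪≫ₗ eQ
  have hR : ∀ R : E →L[ℝ] E, R * R = R →
      ∀ x : LinearMap.range (R : E →ₗ[ℝ] E), R x = x := by
    rintro R hR ⟨_, y, rfl⟩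
    exact congrArg (fun T : E →L[ℝ] E => T y) hR
  refine ⟨T.toContinuousLinearEquiv, ContinuousLinearMap.ext fun v => ?_⟩
  change T (P v) = Q (T v)
  obtain ⟨⟨x, y⟩, rfl⟩ := eP.surjective v
  have hT : ∀ x y, T (eP (x, y)) = a x + b y := fun x y => by simp [T, eQ]
  have hx : P (eP (x, y)) = eP (x, 0) := by
    have hy : P y = 0 := y.2
    simp [eP, hR P hP x, hy]
  have hb : Q (b y) = 0 := (b y).2
  rw [hx, hT, hT, map_add, hb, hR Q hQ, map_zero]
  rfl

theorem AdmissibleFact.isCoprime {n : ℕ} {L : (Fin n → ℝ) → Matrix (Fin n) (Fin n) ℝ}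
    {U : Set (Fin n → ℝ)} {chi1 chi2 : (Fin n → ℝ) → ℝ[X]} (h : AdmissibleFact L U chi1 chi2)
    {x : Fin n → ℝ} (hx : x ∈ U) : IsCoprime (chi1 x) (chi2 x) := by
  refine (Polynomial.isCoprime_iff_aeval_ne_zero_of_isAlgClosed ℝ ℂ _ _).2 fun z => ?_
  by_contra! hz
  exact h.coprime x hx ⟨z, hz⟩

theorem AdmissibleFact.aeval_matOp {n : ℕ} {L : (Fin n → ℝ) → Matrix (Fin n) (Fin n) ℝ}
    {U : Set (Fin n → ℝ)} {chi1 chi2 : (Fin n → ℝ) → ℝ[X]} (h : AdmissibleFact L U chi1 chi2)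
    {x : Fin n → ℝ} (hx : x ∈ U) : aeval (matOp n (L x)) (chi1 x * chi2 x) = 0 := by
  rw [← h.factor x hx, ← matOp_aeval, Matrix.aeval_self_charpoly, map_zero]

theorem AdmissibleFact.symm {n : ℕ} {L : (Fin n → ℝ) → Matrix (Fin n) (Fin n) ℝ}
    {U : Set (Fin n → ℝ)} {chi1 chi2 : (Fin n → ℝ) → ℝ[X]} (h : AdmissibleFact L U chi1 chi2) :
    AdmissibleFact L U chi2 chi1 where
  factor x hx := by rw [h.factor x hx, mul_comm]
  monic1 := h.monic2
  monic2 := h.monic1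
  deg1 := h.deg2
  deg2 := h.deg1
  smooth1 := h.smooth2
  smooth2 := h.smooth1
  coprime x hx := fun ⟨z, hz⟩ => h.coprime x hx ⟨z, hz.2, hz.1⟩

theorem AdmissibleFact.natDegree_lt {n : ℕ} {L : (Fin n → ℝ) → Matrix (Fin n) (Fin n) ℝ}
    {U : Set (Fin n → ℝ)} {chi1 chi2 : (Fin n → ℝ) → ℝ[X]} (h : AdmissibleFact L U chi1 chi2)
    {x : Fin n → ℝ} (hx : x ∈ U) : (chi1 x).natDegree < n + 1 := by
  have h1 := Matrix.charpoly_natDegree_eq_dim (L x)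
  rw [h.factor x hx, (h.monic1 x hx).natDegree_mul (h.monic2 x hx), Fintype.card_fin] at h1
  omega

theorem AdmissibleFact.contDiffOn_spectralProj {n : ℕ}
    {L : (Fin n → ℝ) → Matrix (Fin n) (Fin n) ℝ} {U : Set (Fin n → ℝ)}
    {chi1 chi2 : (Fin n → ℝ) → ℝ[X]} (h : AdmissibleFact L U chi1 chi2) (hU : IsOpen U)
    (hL : ContDiffOn ℝ ∞ (fun x => matOp n (L x)) U) :
    ContDiffOn ℝ ∞ (fun x => spectralProj (matOp n (L x)) (chi1 x) (chi2 x)) U :=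
  _root_.contDiffOn_spectralProj hU hL h.smooth1 h.smooth2 (fun _ hx => h.natDegree_lt hx)
    (fun _ hx => h.symm.natDegree_lt hx) (fun _ hx => h.isCoprime hx) fun _ hx => h.aeval_matOp hx

theorem AdmissibleFact.mem_Dker {n : ℕ}
    {L : (Fin n → ℝ) → Matrix (Fin n) (Fin n) ℝ} {U : Set (Fin n → ℝ)}
    {chi1 chi2 : (Fin n → ℝ) → ℝ[X]} (h : AdmissibleFact L U chi1 chi2) {x : Fin n → ℝ}
    (hx : x ∈ U) {w : Fin n → ℝ} :
    w ∈ Dker L chi1 x ↔ spectralProj (matOp n (L x)) (chi1 x) (chi2 x) w = w := by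
  have hp := aeval_mul_spectralProj (h.isCoprime hx) (h.aeval_matOp hx)
  have hq := aeval_mul_one_sub_spectralProj (h.isCoprime hx) (h.aeval_matOp hx)
  exact mem_ker_mulVecLin_aeval.trans (aeval_apply_eq_zero_iff (h.isCoprime hx) hp hq)

theorem AdmissibleFact.fderiv_spectralProj_symm {n : ℕ}
    {L : (Fin n → ℝ) → Matrix (Fin n) (Fin n) ℝ} {U : Set (Fin n → ℝ)}
    {chi1 chi2 : (Fin n → ℝ) → ℝ[X]} (h : AdmissibleFact L U chi1 chi2) (hU : IsOpen U)
    (hL : ContDiffOn ℝ ∞ (fun x => matOp n (L x)) U) (hNL : NijenhuisZero L U) {x : Fin n → ℝ}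
    (hx : x ∈ U) {u v : Fin n → ℝ}
    (hu : spectralProj (matOp n (L x)) (chi1 x) (chi2 x) u = u)
    (hv : spectralProj (matOp n (L x)) (chi1 x) (chi2 x) v = v) :
    fderiv ℝ (fun x => spectralProj (matOp n (L x)) (chi1 x) (chi2 x)) x u v
      = fderiv ℝ (fun x => spectralProj (matOp n (L x)) (chi1 x) (chi2 x)) x v u :=
  _root_.fderiv_spectralProj_symm hU hL (h.contDiffOn_spectralProj hU hL)
    (fun _ hx => h.isCoprime hx) (fun _ hx => h.aeval_matOp hx) hx
    (torsion_of_nijenhuisZero hNL hx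
      ((hL.contDiffAt (hU.mem_nhds hx)).differentiableAt (by simp))) hu hv

theorem AdmissibleFact.isIntegrableDist_Dker {n : ℕ}
    {L : (Fin n → ℝ) → Matrix (Fin n) (Fin n) ℝ} {U : Set (Fin n → ℝ)}
    {chi1 chi2 : (Fin n → ℝ) → ℝ[X]} (h : AdmissibleFact L U chi1 chi2) (hU : IsOpen U)
    (hL : ContDiffOn ℝ ∞ (fun x => matOp n (L x)) U) (hNL : NijenhuisZero L U) :
    IsIntegrableDist U (Dker L chi1) := by
  intro u v hu hv hDu hDv x hx
  rw [h.mem_Dker hx]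
  exact projection_apply_bracket hU (h.contDiffOn_spectralProj hU hL) hx
    (fun a b ha hb => h.fderiv_spectralProj_symm hU hL hNL hx ha hb) hu hv
    (fun y hy => (h.mem_Dker hy).1 (hDu y hy)) fun y hy => (h.mem_Dker hy).1 (hDv y hy)

theorem AdmissibleFact.finrank_range_spectralProj {n : ℕ}
    {L : (Fin n → ℝ) → Matrix (Fin n) (Fin n) ℝ} {U : Set (Fin n → ℝ)}
    {chi1 chi2 : (Fin n → ℝ) → ℝ[X]} (h : AdmissibleFact L U chi1 chi2) {x : Fin n → ℝ}
    (hx : x ∈ U) :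
    Module.finrank ℝ (LinearMap.range
      (ContinuousLinearMap.toLinearMap (spectralProj (matOp n (L x)) (chi1 x) (chi2 x)))) = (chi1 x).natDegree := by
  have hpq := h.isCoprime hx
  have h0 := h.aeval_matOp hx
  have haeval : ∀ (p : ℝ[X]) (w : Fin n → ℝ),
      aeval (Matrix.toLin' (L x)) p w = aeval (matOp n (L x)) p w := by
    intro p w
    rw [← matOp_aeval]
    exact congrArg (fun T : (Fin n → ℝ) →ₗ[ℝ] (Fin n → ℝ) => T w)
      (aeval_algHom_apply (Matrix.toLinAlgEquiv' (R := ℝ) (n := Fin n)).toAlgHom (L x) p)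
  set P := spectralProj (matOp n (L x)) (chi1 x) (chi2 x) with hP
  have hPP : P * P = P := spectralProj_mul_self hpq h0
  have hPL : ∀ w, P (matOp n (L x) w) = matOp n (L x) (P w) := fun w =>
    congrArg (fun T : (Fin n → ℝ) →L[ℝ] (Fin n → ℝ) => T w) (spectralProj_commute hpq h0)
  have hp := aeval_mul_spectralProj hpq h0
  have hq := aeval_mul_one_sub_spectralProj hpq h0
  refine finrank_eq_natDegree_of_isCompl (f := Matrix.toLin' (L x)) (q := chi2 x)
    (W := LinearMap.ker (P : (Fin n → ℝ) →ₗ[ℝ] (Fin n → ℝ)))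
    (LinearMap.IsIdempotentElem.isCompl ?_) ?_ ?_ ?_ ?_ hpq ?_
  · change (P : (Fin n → ℝ) →ₗ[ℝ] (Fin n → ℝ)) * (P : (Fin n → ℝ) →ₗ[ℝ] (Fin n → ℝ)) = P
    exact congrArg ContinuousLinearMap.toLinearMap hPP
  · rintro _ ⟨w, rfl⟩
    exact ⟨matOp n (L x) w, hPL w⟩
  · intro w hw
    change P (matOp n (L x) w) = 0
    rw [hPL, show P w = 0 from hw, map_zero]
  · rintro _ ⟨w, rfl⟩
    rw [haeval]
    exact congrArg (fun T : (Fin n → ℝ) →L[ℝ] (Fin n → ℝ) => T w) hp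
  · intro w hw
    rw [haeval]
    exact (aeval_apply_eq_zero_iff' hpq hp hq).2 hw
  · rw [Matrix.charpoly_toLin', h.factor x hx]

end LocalSplitting

theorem stmt14 {n r : ℕ} (hr : r ≤ n) (U : Set (Fin n → ℝ)) (hU : IsOpen U)
    (L : (Fin n → ℝ) → Matrix (Fin n) (Fin n) ℝ)
    (hLsmooth : ∀ i j, ContDiffOn ℝ (⊤ : ℕ∞) (fun x => L x i j) U)
    (hNL : NijenhuisZero L U)
    (chi1 chi2 : (Fin n → ℝ) → Polynomial ℝ)
    (hfac : AdmissibleFact L U chi1 chi2)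
    (hdeg : ∀ x ∈ U, (chi1 x).natDegree = r) :
    -- around every point there is a coordinate system `(x,y)` adapted to
    -- `D₁ = ker χ₁(L)`, `D₂ = ker χ₂(L)`, in which `L = diag(L₁(x), L₂(y))` …
    (∀ p ∈ U, ∃ W : Set (Fin n → ℝ), IsOpen W ∧ p ∈ W ∧ W ⊆ U ∧
      ∃ (W' : Set (Fin n → ℝ)) (Φ Ψ : (Fin n → ℝ) → Fin n → ℝ),
        IsOpen W' ∧ ContDiffOn ℝ (⊤ : ℕ∞) Φ W ∧ ContDiffOn ℝ (⊤ : ℕ∞) Ψ W' ∧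
        Φ '' W = W' ∧ (∀ x ∈ W, Ψ (Φ x) = x) ∧ (∀ z ∈ W', Φ (Ψ z) = z) ∧
        -- `LT` is the coordinate representation of `L` in the new coordinates
        (∀ LT : (Fin n → ℝ) → Matrix (Fin n) (Fin n) ℝ,
          (∀ z ∈ W', LT z = jac Φ (Ψ z) * L (Ψ z) * jac Ψ z) →
          ∀ z ∈ W',
            -- the coordinate vector fields `∂_{x^i}` generate `D₁` and the
            -- `∂_{y^j}` generate `D₂`
            (LinearMap.ker (Matrix.mulVecLin (aeval (LT z) (chi1 (Ψ z))))
                = coordSpan n r) ∧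
            (LinearMap.ker (Matrix.mulVecLin (aeval (LT z) (chi2 (Ψ z))))
                = coordSpan' n r) ∧
            -- `L` is block-diagonal in the new coordinates
            (∀ i j : Fin n, (((i : ℕ) < r ∧ r ≤ (j : ℕ)) ∨ (r ≤ (i : ℕ) ∧ (j : ℕ) < r)) →
              LT z i j = 0) ∧
            -- the entries of `L₁` depend only on `x` …
            (∀ i j : Fin n, (i : ℕ) < r → (j : ℕ) < r →
              ∀ m : Fin n, r ≤ (m : ℕ) → pd m (fun w => LT w i j) z = 0) ∧
            -- … and those of `L₂` only on `y`
            (∀ i j : Fin n, r ≤ (i : ℕ) → r ≤ (j : ℕ) →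
              ∀ m : Fin n, (m : ℕ) < r → pd m (fun w => LT w i j) z = 0))) ∧
    -- in particular, the distributions `D₁` and `D₂` are integrable
    IsIntegrableDist U (Dker L chi1) ∧ IsIntegrableDist U (Dker L chi2) := by
  have hL : ContDiffOn ℝ (⊤ : ℕ∞) (fun x => matOp n (L x)) U := contDiffOn_matOp hLsmooth
  refine ⟨fun p hp => ?_, hfac.isIntegrableDist_Dker hU hL hNL,
    hfac.symm.isIntegrableDist_Dker hU hL hNL⟩
  set P : (Fin n → ℝ) → (Fin n → ℝ) →L[ℝ] (Fin n → ℝ) :=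
    fun x => spectralProj (matOp n (L x)) (chi1 x) (chi2 x) with hPdef
  have hpq : ∀ x ∈ U, IsCoprime (chi1 x) (chi2 x) := fun x hx => hfac.isCoprime hx
  have h0 : ∀ x ∈ U, aeval (matOp n (L x)) (chi1 x * chi2 x) = 0 := fun x hx => hfac.aeval_matOp hx
  have hPP : ∀ x ∈ U, P x * P x = P x := fun x hx => spectralProj_mul_self (hpq x hx) (h0 x hx)
  have hinv' : ∀ x ∈ U, ∀ u v, P x u = 0 → P x v = 0 → fderiv ℝ P x u v = fderiv ℝ P x v u := by
    intro x hx u v hu hv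
    have hswap : ∀ y ∈ U, spectralProj (matOp n (L y)) (chi2 y) (chi1 y) = 1 - P y :=
      fun y hy => spectralProj_swap (hpq y hy) (h0 y hy)
    have hd : fderiv ℝ (fun y => spectralProj (matOp n (L y)) (chi2 y) (chi1 y)) x
        = - fderiv ℝ P x := by
      rw [Filter.EventuallyEq.fderiv_eq (eventually_of_mem (hU.mem_nhds hx) hswap),
        fderiv_const_sub]
    have hfix : ∀ w, P x w = 0 → spectralProj (matOp n (L x)) (chi2 x) (chi1 x) w = w := by
      intro w hw
      rw [hswap x hx]
      change w - P x w = w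
      rw [hw, sub_zero]
    have h := hfac.symm.fderiv_spectralProj_symm hU hL hNL hx (hfix u hu) (hfix v hv)
    rw [hd] at h
    exact neg_injective h
  obtain ⟨T, hT⟩ := exists_conj_of_finrank_range_eq (hPP p hp) (coordProj_mul_self n r) (by
    rw [finrank_range_coordProj hr, ← hdeg p hp]
    exact hfac.finrank_range_spectralProj hp)
  obtain ⟨e, hpe, heU, he, hes, heP⟩ := exists_adapted_coordinates hU
    (hfac.contDiffOn_spectralProj hU hL) hPP
    (fun x hx u v hu hv => hfac.fderiv_spectralProj_symm hU hL hNL hx hu hv) hinv' hp T hT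
  refine ⟨e.source, e.open_source, hpe, heU, e.target, e, e.symm, e.open_target, he, hes,
    e.image_source_eq_target, fun x hx => e.left_inv hx, fun z hz => e.right_inv hz, ?_⟩
  intro LT hLT z hz
  have hΛ : ∀ z ∈ e.target, matOp n (LT z)
      = fderiv ℝ e (e.symm z) * matOp n (L (e.symm z)) * fderiv ℝ e.symm z := by
    intro z hz
    rw [hLT z hz, map_mul, map_mul, matOp_jac, matOp_jac]
    · exact (hes.contDiffAt (e.open_target.mem_nhds hz)).differentiableAt (by simp)
    · exact (he.contDiffAt (e.open_source.mem_nhds (e.map_target hz))).differentiableAt (by simp)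
  obtain ⟨hdiff, hcomm, hp1, hp2, hD1, hD2⟩ := splitting_in_coordinates (P := P) hU hL
    (fun x hx => torsion_of_nijenhuisZero hNL hx
      ((hL.contDiffAt (hU.mem_nhds hx)).differentiableAt (by simp))) hpq
    (fun x hx => spectralProj_commute (hpq x hx) (h0 x hx))
    (fun x hx => aeval_mul_spectralProj (hpq x hx) (h0 x hx))
    (fun x hx => aeval_mul_one_sub_spectralProj (hpq x hx) (h0 x hx))
    (coordProj_mul_self n r) e heU he hes heP hΛ hz
  have hpqz := hpq _ (heU (e.map_target hz))
  refine ⟨?_, ?_, ?_, ?_, ?_⟩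
  · ext w
    exact mem_ker_mulVecLin_aeval.trans
      ((aeval_apply_eq_zero_iff hpqz hp1 hp2).trans mem_coordSpan.symm)
  · ext w
    exact mem_ker_mulVecLin_aeval.trans
      ((aeval_apply_eq_zero_iff' hpqz hp1 hp2).trans mem_coordSpan'.symm)
  · intro i j hij
    have h := congrArg (fun T : (Fin n → ℝ) →L[ℝ] (Fin n → ℝ) => T (Pi.single j 1) i) hcomm
    change coordProj n r (matOp n (LT z) (Pi.single j 1)) i
      = matOp n (LT z) (coordProj n r (Pi.single j 1)) i at h
    rw [coordProj_apply, matOp_single] at h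
    rcases hij with ⟨hi, hj⟩ | ⟨hi, hj⟩
    · rwa [if_pos hi, coordProj_single_of_le hj, map_zero] at h
    · rw [if_neg hi.not_gt, coordProj_single_of_lt hj, matOp_single] at h
      exact h.symm
  · intro i j _ hj m hm
    rw [pd_entry_eq hdiff, hD1 _ _ (coordProj_single_of_lt hj) (coordProj_single_of_le hm)]
    rfl
  · intro i j _ hj m hm
    rw [pd_entry_eq hdiff, hD2 _ _ (coordProj_single_of_le hj) (coordProj_single_of_lt hm)]
    rfl
end
end

section
/- Let L be a (1,1)-tensor field on M^n with vanishing Nijenhuis torsion, let χ(t) = det(t·Id − L) = a_0 + a_1 t + ⋯ + a_{n−1} t^{n−1} + t^n be its characteristic polynomial (the a_k being smooth functions on M), let dχ(t) := da_0 + t·da_1 + ⋯ + t^{n−1}·da_{n−1} be the polynomial in t with covector coefficients obtained by differentiating the coefficients, and let l = d(tr L). Then dχ(t)·L − t·dχ(t) = χ(t)·l, as an identity of polynomials in t with covector coefficients, where (dχ(t)·L)_s = (dχ(t))_p L^p_s denotes the covector dχ(t) composed with the operator L. -/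
open Matrix Polynomial Filter

noncomputable section

variable {ι : Type} [Fintype ι] [DecidableEq ι]

theorem Matrix.trace_adjugate_mul {R : Type*} [CommRing R] (A B : Matrix ι ι R) :
    (A.adjugate * B).trace = ∑ i, (A.updateRow i (B i)).det := by
  have h (i : ι) : (A.updateRow i (B i)).det = ∑ j, A.adjugate j i * B i j := by
    rw [← cramer_transpose_apply, cramer_eq_adjugate_mulVec, ← adjugate_transpose]
    rfl
  simp only [h, trace, diag_apply, mul_apply]
  exact Finset.sum_comm

/-- The entrywise partial derivative of a matrix-valued function. -/
def pdMatrix (j : ι) (A : (ι → ℝ) → Matrix ι ι ℝ) (x : ι → ℝ) : Matrix ι ι ℝ :=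
  of fun i k => pd j (fun y => A y i k) x

/-- The Jacobi formula for the partial derivatives of a determinant. -/
theorem pd_det {A : (ι → ℝ) → Matrix ι ι ℝ} {x : ι → ℝ}
    (hA : ∀ i j, DifferentiableAt ℝ (fun y => A y i j) x) (j : ι) :
    pd j (fun y => (A y).det) x = ((A x).adjugate * pdMatrix j A x).trace := by
  let f : ContinuousMultilinearMap ℝ (fun _ : ι => ι → ℝ) ℝ :=
    { (detRowAlternating (n := ι) (R := ℝ)).toMultilinearMap with
      cont := Continuous.matrix_det (A := fun M : ι → ι → ℝ => of M) continuous_id }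
  let F : (ι → ℝ) → ι → ι → ℝ := fun y i k => A y i k
  have hF : HasFDerivAt F (.pi fun i => .pi fun k => fderiv ℝ (fun y => A y i k) x) x :=
    hasFDerivAt_pi.2 fun i => hasFDerivAt_pi.2 fun k => (hA i k).hasFDerivAt
  have h : HasFDerivAt (fun y => (A y).det) _ x := (f.hasFDerivAt (F x)).comp x hF
  rw [pd, h.fderiv, trace_adjugate_mul, ContinuousLinearMap.comp_apply,
    ContinuousMultilinearMap.linearDeriv_apply]
  rfl

theorem differentiableAt_charpoly_coeff {A : (ι → ℝ) → Matrix ι ι ℝ} {x : ι → ℝ}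
    (hA : ∀ i j, DifferentiableAt ℝ (fun y => A y i j) x) (k : ℕ) :
    DifferentiableAt ℝ (fun y => (A y).charpoly.coeff k) x := by
  let p := (charpoly.univ ℝ ι).coeff k
  have hp (y : ι → ℝ) :
      (A y).charpoly.coeff k = MvPolynomial.aeval (fun ij : ι × ι => A y ij.1 ij.2) p :=
    (charpoly.univ_coeff_eval₂Hom ι (RingHom.id ℝ) (fun ij : ι × ι => A y ij.1 ij.2) k).symm
  simp only [hp]
  have hg : DifferentiableAt ℝ (fun z : ι × ι → ℝ => MvPolynomial.aeval z p)
      (fun ij => A x ij.1 ij.2) :=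
    (AnalyticAt.aeval_mvPolynomial
      (fun i => (ContinuousLinearMap.proj (R := ℝ) (φ := fun _ : ι × ι => ℝ) i).analyticAt _)
      p).differentiableAt
  have hf : DifferentiableAt ℝ (fun y => fun ij : ι × ι => A y ij.1 ij.2) x :=
    differentiableAt_pi.2 fun ij => hA ij.1 ij.2
  exact DifferentiableAt.comp (g := fun z : ι × ι → ℝ => MvPolynomial.aeval z p) x hg hf

/-- The polynomial whose coefficients are the partial derivatives of those of the
characteristic polynomial. -/
def pdCharpoly (j : ι) (A : (ι → ℝ) → Matrix ι ι ℝ) (x : ι → ℝ) : ℝ[X] :=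
  ∑ k ∈ Finset.range (Fintype.card ι + 1), monomial k (pd j (fun y => (A y).charpoly.coeff k) x)

theorem pdCharpoly_coeff (j : ι) (A : (ι → ℝ) → Matrix ι ι ℝ) (x : ι → ℝ) (k : ℕ) :
    (pdCharpoly j A x).coeff k = pd j (fun y => (A y).charpoly.coeff k) x := by
  simp only [pdCharpoly, finsetSum_coeff, coeff_monomial, Finset.sum_ite_eq', Finset.mem_range]
  split_ifs with hk
  · rfl
  · have (y : ι → ℝ) : (A y).charpoly.coeff k = 0 :=
      coeff_eq_zero_of_natDegree_lt (by rw [charpoly_natDegree_eq_dim]; omega)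
    simp [this, pd]

theorem eval_pdCharpoly {A : (ι → ℝ) → Matrix ι ι ℝ} {x : ι → ℝ}
    (hA : ∀ i j, DifferentiableAt ℝ (fun y => A y i j) x) (j : ι) (t : ℝ) :
    (pdCharpoly j A x).eval t = -((scalar ι t - A x).adjugate * pdMatrix j A x).trace := by
  have heval (y : ι → ℝ) : (scalar ι t - A y).det =
      ∑ k ∈ Finset.range (Fintype.card ι + 1), (A y).charpoly.coeff k * t ^ k := by
    rw [← eval_charpoly, eval_eq_sum_range, charpoly_natDegree_eq_dim]
  have hsum : (pdCharpoly j A x).eval t = pd j (fun y => (scalar ι t - A y).det) x := by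
    simp only [heval, pd, pdCharpoly, eval_finsetSum, eval_monomial]
    rw [fderiv_fun_sum fun k _ => (differentiableAt_charpoly_coeff hA k).mul_const _]
    simp only [_root_.sum_apply]
    refine Finset.sum_congr rfl fun k _ => ?_
    rw [fderiv_mul_const (differentiableAt_charpoly_coeff hA k)]
    simp [mul_comm]
  have hneg : pdMatrix j (fun y => scalar ι t - A y) x = -pdMatrix j A x := by
    ext i k
    simp [pdMatrix, pd, fderiv_const_sub]
  rw [hsum, pd_det (A := fun y => scalar ι t - A y) (fun i k => (hA i k).const_sub _), hneg,
    mul_neg, trace_neg]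

/-- Vanishing torsion on the coordinate fields, with one of the two fields fixed. -/
theorem NijenhuisZero.commutator {U : Set (ι → ℝ)} {L : (ι → ℝ) → Matrix ι ι ℝ}
    (hN : NijenhuisZero L U) {x : ι → ℝ} (hx : x ∈ U)
    (hL : ∀ i j, DifferentiableAt ℝ (fun y => L y i j) x) (s : ι) :
    ∃ B : Matrix ι ι ℝ, L x * pdMatrix s L x - ∑ q, L x q s • pdMatrix q L x =
      L x * B - B * L x := by
  refine ⟨of fun i j => pdMatrix j L x i s, ?_⟩
  have hder (k : ι) (w : ι → ℝ) (i : ι) :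
      fderiv ℝ (appT L fun _ => Pi.single k 1) x w i = ∑ q, w q * pdMatrix q L x i k := by
    have he : (appT L fun _ => Pi.single k 1) = fun y i => L y i k := by
      funext y i
      simp [appT]
    rw [he, fderiv_pi (fun i => hL i k), ContinuousLinearMap.pi_apply]
    conv_lhs => rw [pi_eq_sum_univ' w, map_sum]
    simp [pdMatrix, pd]
  ext i j
  have h := congrFun (hN (fun _ => Pi.single j 1) (fun _ => Pi.single s 1)
    contDiff_const contDiff_const x hx) i
  have hcol (k q : ι) : (appT L (fun _ => Pi.single k 1) x) q = L x q k := by simp [appT]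
  simp only [nijenhuis, vbracket, fderiv_fun_const, Pi.zero_apply,
    _root_.zero_apply, sub_zero, zero_sub, mulVec_zero, mulVec_neg, Pi.add_apply,
    Pi.sub_apply, Pi.neg_apply, hder, hcol, mulVec, dotProduct, Pi.single_apply, ite_mul,
    one_mul, zero_mul, Finset.sum_ite_eq', Finset.mem_univ, if_true] at h
  simp only [Matrix.sub_apply, mul_apply, Matrix.sum_apply, Matrix.smul_apply, smul_eq_mul,
    of_apply]
  simp only [mul_comm (L x _ j)] at h
  linarith

theorem commute_adjugate_scalar_sub {R : Type*} [CommRing R] (A : Matrix ι ι R) (t : R) :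
    Commute (scalar ι t - A).adjugate A := by
  have h : Commute (scalar ι t - A).adjugate (scalar ι t - A) := by
    rw [commute_iff_eq, adjugate_mul, mul_adjugate]
  have := ((scalar_commute t (mul_comm _) (scalar ι t - A).adjugate).symm).sub_right h
  rwa [sub_sub_cancel] at this

theorem pd_trace {A : (ι → ℝ) → Matrix ι ι ℝ} {x : ι → ℝ}
    (hA : ∀ i j, DifferentiableAt ℝ (fun y => A y i j) x) (j : ι) :
    pd j (fun y => (A y).trace) x = (pdMatrix j A x).trace := by
  simp only [pd, trace, diag_apply, pdMatrix, of_apply]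
  rw [fderiv_fun_sum fun i _ => hA i i]
  simp

theorem sum_pdCharpoly_mul_sub {U : Set (ι → ℝ)} {L : (ι → ℝ) → Matrix ι ι ℝ}
    (hN : NijenhuisZero L U) {x : ι → ℝ} (hx : x ∈ U)
    (hL : ∀ i j, DifferentiableAt ℝ (fun y => L y i j) x) (s : ι) :
    ∑ q, pdCharpoly q L x * C (L x q s) - X * pdCharpoly s L x =
      (L x).charpoly * C (pd s (fun y => (L y).trace) x) := by
  refine Polynomial.funext fun t => ?_
  obtain ⟨B, hB⟩ := hN.commutator hx hL s
  simp only [eval_sub, eval_mul, eval_finsetSum, eval_C, eval_X, eval_pdCharpoly hL,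
    eval_charpoly, pd_trace hL]
  set M := (scalar ι t - L x).adjugate with hM
  set D := pdMatrix s L x
  have hcomm : M * L x = L x * M := commute_adjugate_scalar_sub (L x) t
  have hMB : (M * (L x * B - B * L x)).trace = 0 := by
    rw [mul_sub, trace_sub, ← mul_assoc, ← mul_assoc, hcomm, mul_assoc, trace_mul_comm (L x),
      sub_self]
  have hsum : ∑ q, -(M * pdMatrix q L x).trace * L x q s = -(M * (L x * D)).trace := by
    rw [← hB, mul_sub, trace_sub, sub_eq_zero] at hMB
    rw [hMB, Finset.mul_sum, trace_sum, ← Finset.sum_neg_distrib]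
    refine Finset.sum_congr rfl fun q _ => ?_
    rw [mul_smul_comm, trace_smul, smul_eq_mul]
    ring
  have hdet : (M * ((scalar ι t - L x) * D)).trace = (scalar ι t - L x).det * D.trace := by
    rw [← mul_assoc, hM, adjugate_mul, smul_mul_assoc, one_mul, trace_smul, smul_eq_mul]
  have hscalar : scalar ι t * D = t • D := by
    rw [scalar_apply, ← smul_eq_diagonal_mul]
  rw [hsum, ← hdet, sub_mul, mul_sub, trace_sub, hscalar, mul_smul_comm, trace_smul, smul_eq_mul]
  ring

theorem stmt15 {n : ℕ} (U : Set (Fin n → ℝ)) (hU : IsOpen U)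
    (L : (Fin n → ℝ) → Matrix (Fin n) (Fin n) ℝ)
    (hLsmooth : ∀ i j, ContDiffOn ℝ (⊤ : ℕ∞) (fun x => L x i j) U)
    (hNL : NijenhuisZero L U) :
    -- `dχ(t)·L − t·dχ(t) = χ(t)·l` as polynomials in `t` with covector
    -- coefficients: for every degree `k` and every covector index `s`,
    -- (coefficient of `t^k` in `dχ(t)·L`) − (coefficient of `t^k` in `t·dχ(t)`)
    --   = (coefficient of `t^k` in `χ(t)·l`).
    ∀ x ∈ U, ∀ k : ℕ, ∀ s : Fin n,
      (∑ q, pd q (fun y => ((L y).charpoly).coeff k) x * L x q s)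
        - (if k = 0 then 0 else pd s (fun y => ((L y).charpoly).coeff (k - 1)) x)
        = ((L x).charpoly).coeff k * pd s (fun y => (L y).trace) x := by
  intro x hx k s
  have hL (i j : Fin n) : DifferentiableAt ℝ (fun y => L y i j) x :=
    ((hLsmooth i j).contDiffAt (hU.mem_nhds hx)).differentiableAt (by simp)
  have h := congrArg (fun p => p.coeff k) (sum_pdCharpoly_mul_sub hNL hx hL s)
  simp only [coeff_sub, finsetSum_coeff, coeff_mul_C, pdCharpoly_coeff] at h
  rw [← h]
  cases k with
  | zero => simp
  | succ k => simp [coeff_X_mul, pdCharpoly_coeff]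
end
end

section
/- Let g be a pseudo-Riemannian metric on M, L a g-self-adjoint (1,1)-tensor field, l = d(tr L), and let K, f, L satisfy the admissibility assumptions. For a tangent vector u define A*_u := (d/dt)|_{t=0} f(L + t·(u⊗l)^*), where (u⊗l)^* is the g-adjoint of the operator (u⊗l) : v ↦ l(v)·u, so that (u⊗l)^* v = g(u,v)·g^{-1}(l). Then A*_u v = A*_v u for all tangent vectors u, v. -/
open Matrix Polynomial Filter

noncomputable section

variable {ι : Type} [Fintype ι] [DecidableEq ι]

/-- The assumptions (i)–(iv) of Section 1.3 on the compact set `K` and the function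
`f : K → ℂ` (the condition on the spectrum of `L` is stated separately). -/
structure AdmissibleFun (K : Set ℂ) (f : ℂ → ℂ) : Prop where
  compact : IsCompact K
  conn : IsConnected Kᶜ
  cont : ContinuousOn f K
  holo : DifferentiableOn ℂ f (interior K)
  symmK : ∀ z ∈ K, (starRingEnd ℂ) z ∈ K
  symmf : ∀ z ∈ K, f ((starRingEnd ℂ) z) = (starRingEnd ℂ) (f z)

/-- Assumption (v): the (complex) spectrum of `L(x)` lies in the interior of `K` for
every `x ∈ U`. -/
def SpectrumIn {ι : Type} [Fintype ι] [DecidableEq ι]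
    (L : (ι → ℝ) → Matrix ι ι ℝ) (U : Set (ι → ℝ)) (K : Set ℂ) : Prop :=
  ∀ x ∈ U, spectrum ℂ ((L x).map (algebraMap ℝ ℂ)) ⊆ interior K

/-- `FL` represents the (1,1)-tensor `f(L)`: it is the limit of `pᵢ(L)` for a sequence
of real polynomials `pᵢ` converging to `f` uniformly on `K` (such a sequence exists by
Mergelyan's theorem, and the limit does not depend on its choice). -/
def RepFunOfL {ι : Type} [Fintype ι] [DecidableEq ι]
    (L : (ι → ℝ) → Matrix ι ι ℝ) (U : Set (ι → ℝ)) (K : Set ℂ) (f : ℂ → ℂ)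
    (FL : (ι → ℝ) → Matrix ι ι ℝ) : Prop :=
  ∃ p : ℕ → Polynomial ℝ,
    TendstoUniformlyOn (fun m z => aeval z (p m)) f atTop K ∧
    ∀ x ∈ U, ∀ i j, Tendsto (fun m => aeval (L x) (p m) i j) atTop (nhds (FL x i j))

lemma isSymm_mul_pow {n : ℕ} {S A : Matrix (Fin n) (Fin n) ℂ} (hS : S.IsSymm)
    (hSA : (S * A).IsSymm) (j : ℕ) : (S * A ^ j).IsSymm := by
  have hAS : Aᵀ * S = S * A := by
    have := hSA.eq
    rwa [transpose_mul, hS.eq] at this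
  have hcomm : ∀ j : ℕ, (Aᵀ) ^ j * S = S * A ^ j := by
    intro j
    induction j with
    | zero => simp
    | succ j ih => rw [pow_succ, mul_assoc, hAS, ← mul_assoc, ih, mul_assoc, ← pow_succ]
  rw [IsSymm, transpose_mul, hS.eq, transpose_pow, hcomm]

lemma pow_mul_vecMulVec_mul_pow_mulVec_comm {n : ℕ} {S A : Matrix (Fin n) (Fin n) ℂ}
    (hS : S.IsSymm) (hSA : (S * A).IsSymm) (w : Fin n → ℂ) (i j : ℕ) (u v : Fin n → ℂ) :
    (A ^ i * vecMulVec w (S *ᵥ u) * A ^ j) *ᵥ v =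
      (A ^ i * vecMulVec w (S *ᵥ v) * A ^ j) *ᵥ u := by
  have hpair : ∀ u v : Fin n → ℂ,
      (S *ᵥ u) ⬝ᵥ (A ^ j *ᵥ v) = u ⬝ᵥ ((S * A ^ j) *ᵥ v) := by
    intro u v
    rw [← mulVec_mulVec, dotProduct_mulVec u, ← mulVec_transpose, hS.eq]
  have hsymm : (S *ᵥ u) ⬝ᵥ (A ^ j *ᵥ v) = (S *ᵥ v) ⬝ᵥ (A ^ j *ᵥ u) := by
    rw [hpair, hpair, dotProduct_mulVec, ← mulVec_transpose,
      (isSymm_mul_pow hS hSA _).eq, dotProduct_comm]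
  rw [← mulVec_mulVec, ← mulVec_mulVec, ← mulVec_mulVec, ← mulVec_mulVec,
    vecMulVec_mulVec, vecMulVec_mulVec, hsymm]

section OperatorFunction

open scoped Matrix.Norms.Operator Topology

/-- Dividing `p - p(a)` by `X - a` increases the sup norm on a set containing the closed disc
of radius `δ` about `a` at most by the factor `2 / δ`. -/
lemma exists_divided_difference_bound {K : Set ℂ} {δ : ℝ} (hδ : 0 < δ) {a : ℂ}
    (ha : Metric.closedBall a δ ⊆ K) (p : ℂ[X]) {M : ℝ} (hM : ∀ z ∈ K, ‖p.eval z‖ ≤ M) :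
    ∃ q : ℂ[X], p = C (p.eval a) + (X - C a) * q ∧ ∀ z ∈ K, ‖q.eval z‖ ≤ 2 / δ * M := by
  obtain ⟨q, hq⟩ : X - C a ∣ p - C (p.eval a) := by
    rw [dvd_iff_isRoot]; simp [IsRoot]
  have haK : a ∈ K := ha (Metric.mem_closedBall_self hδ.le)
  have hM0 : 0 ≤ M := (norm_nonneg _).trans (hM a haK)
  have hfar : ∀ z ∈ K, δ ≤ ‖z - a‖ → ‖q.eval z‖ ≤ 2 / δ * M := by
    intro z hz hza
    have h1 : p.eval z - p.eval a = (z - a) * q.eval z := by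
      simpa using congrArg (eval z) hq
    have h2 : ‖z - a‖ * ‖q.eval z‖ ≤ 2 * M := by
      rw [← norm_mul, ← h1]
      linarith [norm_sub_le (p.eval z) (p.eval a), hM z hz, hM a haK]
    have h3 : δ * ‖q.eval z‖ ≤ 2 * M :=
      (mul_le_mul_of_nonneg_right hza (norm_nonneg _)).trans h2
    rw [div_mul_eq_mul_div, le_div_iff₀ hδ]
    linarith
  refine ⟨q, by rw [← hq]; ring, fun z hz => ?_⟩
  rcases le_or_gt δ ‖z - a‖ with h | h
  · exact hfar z hz h
  · refine Complex.norm_le_of_forall_mem_frontier_norm_le (U := Metric.ball a δ)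
      (f := fun z => q.eval z) Metric.isBounded_ball q.differentiable.diffContOnCl
      (fun w hw => ?_) (subset_closure (by simpa [dist_eq_norm] using h))
    rw [frontier_ball a hδ.ne', mem_sphere_iff_norm] at hw
    exact hfar w (ha (by simp [dist_eq_norm, hw])) hw.ge

/-- Newton interpolation with uniformly bounded remainder, evaluated in a normed algebra. -/
lemma exists_norm_aeval_sub_prod_le {𝔸 : Type*} [NormedRing 𝔸] [NormedAlgebra ℂ 𝔸]
    (K : Set ℂ) {δ R : ℝ} (hδ : 0 < δ) (hR : 0 ≤ R) (k : ℕ) :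
    ∃ c : ℝ, ∀ (a : 𝔸) (s : Multiset ℂ), s.card = k →
      (∀ z ∈ s, Metric.closedBall z δ ⊆ K ∧ ‖a - algebraMap ℂ 𝔸 z‖ ≤ R) →
      ∀ (p : ℂ[X]) (M : ℝ), 0 ≤ M → (∀ z ∈ K, ‖p.eval z‖ ≤ M) →
        ∃ r : ℂ[X], ‖aeval a (p - (s.map fun z => X - C z).prod * r)‖ ≤ c * M := by
  induction k with
  | zero =>
    refine ⟨0, fun a s hs _ p M _ _ => ⟨p, ?_⟩⟩
    simp [Multiset.card_eq_zero.mp hs]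
  | succ k ih =>
    obtain ⟨c, hc⟩ := ih
    refine ⟨‖(1 : 𝔸)‖ + R * (c * (2 / δ)), fun a s hs hsK p M hM0 hM => ?_⟩
    obtain ⟨z, s, rfl⟩ := Multiset.card_pos_iff_exists_mem.mp (by omega : 0 < s.card) |>.imp
      fun z hz => Multiset.exists_cons_of_mem hz
    obtain ⟨hzK, hzR⟩ := hsK z (Multiset.mem_cons_self z s)
    obtain ⟨q, hq, hqM⟩ := exists_divided_difference_bound hδ hzK p hM
    obtain ⟨r, hr⟩ := hc a s (by simpa using hs)
      (fun w hw => hsK w (Multiset.mem_cons_of_mem hw)) q _ (by positivity) hqM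
    refine ⟨r, ?_⟩
    have hsplit : p - ((z ::ₘ s).map fun z => X - C z).prod * r =
        C (p.eval z) + (X - C z) * (q - (s.map fun z => X - C z).prod * r) := by
      rw [Multiset.map_cons, Multiset.prod_cons]
      nth_rewrite 1 [hq]
      ring
    have h1 : ‖algebraMap ℂ 𝔸 (p.eval z)‖ ≤ M * ‖(1 : 𝔸)‖ := by
      rw [norm_algebraMap]
      exact mul_le_mul_of_nonneg_right
        (hM z (hzK (Metric.mem_closedBall_self hδ.le))) (norm_nonneg _)
    rw [hsplit, map_add, map_mul, aeval_C, map_sub (aeval (R := ℂ) a) X (C z), aeval_X, aeval_C]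
    calc _ ≤ M * ‖(1 : 𝔸)‖ + R * (c * (2 / δ * M)) :=
          (norm_add_le _ _).trans (add_le_add h1 ((norm_mul_le _ _).trans
            (mul_le_mul hzR hr (norm_nonneg _) hR)))
      _ = _ := by ring

/-- Near a matrix with spectrum in the interior of `K`, the norm of `p(A)` is controlled,
uniformly in `A`, by the sup norm of `p` on `K`. -/
lemma eventually_norm_aeval_le {n : ℕ} {K : Set ℂ} (A : Matrix (Fin n) (Fin n) ℂ)
    (hA : spectrum ℂ A ⊆ interior K) :
    ∃ c : ℝ, ∀ᶠ A' in 𝓝 A, ∀ (p : ℂ[X]) (M : ℝ), 0 ≤ M → (∀ z ∈ K, ‖p.eval z‖ ≤ M) →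
      ‖aeval A' p‖ ≤ c * M := by
  obtain ⟨δ, hδ, hδK⟩ :=
    (spectrum.isCompact (𝕜 := ℂ) A).exists_cthickening_subset_open isOpen_interior hA
  set V : Set ℂ := Metric.thickening (δ / 2) (spectrum ℂ A) with hV
  have hVb : Bornology.IsBounded V := (spectrum.isBounded (𝕜 := ℂ) A).thickening
  obtain ⟨R₁, hR₁⟩ := hVb.exists_norm_le
  obtain ⟨c, hc⟩ := exists_norm_aeval_sub_prod_le (𝔸 := Matrix (Fin n) (Fin n) ℂ) K
    (half_pos hδ) (R := ‖A‖ + 1 + |R₁| * ‖(1 : Matrix (Fin n) (Fin n) ℂ)‖) (by positivity) n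
  refine ⟨c, ?_⟩
  have hspec : ∀ᶠ A' in 𝓝 A, spectrum ℂ A' ⊆ V :=
    ((upperHemicontinuous_spectrum ℂ (Matrix (Fin n) (Fin n) ℂ)).upperHemicontinuousAt A V
      (Metric.isOpen_thickening.mem_nhdsSet.mpr
        (Metric.self_subset_thickening (half_pos hδ) _))).mono fun _ h => subset_of_mem_nhdsSet h
  have hnorm : ∀ᶠ A' in 𝓝 A, ‖A'‖ < ‖A‖ + 1 :=
    continuous_norm.continuousAt.eventually_lt_const (lt_add_one _)
  filter_upwards [hspec, hnorm] with A' hA' hA'n p M hM0 hM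
  have hsplits := IsAlgClosed.splits A'.charpoly
  obtain ⟨r, hr⟩ := hc A' A'.charpoly.roots
    (by rw [← hsplits.natDegree_eq_card_roots, charpoly_natDegree_eq_dim, Fintype.card_fin])
    (fun z hz => by
      have hzV : z ∈ V := hA' (mem_spectrum_iff_isRoot_charpoly.mpr (isRoot_of_mem_roots hz))
      constructor
      · intro w hw
        obtain ⟨y, hy, hzy⟩ := Metric.mem_thickening_iff.mp hzV
        refine interior_subset (hδK (Metric.mem_cthickening_of_dist_le w y δ _ hy ?_))
        linarith [dist_triangle w z y, Metric.mem_closedBall.mp hw]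
      · refine (norm_sub_le _ _).trans (add_le_add hA'n.le ?_)
        rw [norm_algebraMap]
        exact mul_le_mul_of_nonneg_right ((hR₁ z hzV).trans (le_abs_self _)) (norm_nonneg _))
    p M hM0 hM
  rwa [← hsplits.eq_prod_roots_of_monic A'.charpoly_monic, map_sub, map_mul,
    aeval_self_charpoly, zero_mul, sub_zero] at hr

/-- The derivative at `0` of `t ↦ (A + t B) ^ k` in a noncommutative normed algebra. -/
lemma hasDerivAt_add_smul_pow {𝔸 : Type*} [NormedRing 𝔸] [NormedAlgebra ℂ 𝔸] (A B : 𝔸) (k : ℕ) :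
    HasDerivAt (fun t : ℂ => (A + t • B) ^ k)
      (∑ i ∈ Finset.range k, A ^ i * B * A ^ (k - 1 - i)) 0 := by
  have hlin : HasDerivAt (fun t : ℂ => A + t • B) B 0 := by
    simpa using ((hasDerivAt_id (0 : ℂ)).smul_const B).const_add A
  induction k with
  | zero => simpa using hasDerivAt_const (0 : ℂ) (1 : 𝔸)
  | succ k ih =>
    have h := ih.fun_mul hlin
    simp only [zero_smul, add_zero] at h
    simp only [pow_succ _ k]
    convert h using 1
    rw [Finset.sum_range_succ, Finset.sum_mul]
    congr 1
    · refine Finset.sum_congr rfl fun i hi => ?_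
      have : k + 1 - 1 - i = (k - 1 - i) + 1 := by
        have := Finset.mem_range.mp hi
        omega
      rw [this, pow_succ, ← mul_assoc]
    · simp

/-- The polynomial case: for `A` self-adjoint with respect to the symmetric form `S`, the
derivative of `p` at `A` along `v ↦ S(u, v) w` applied to `v` is symmetric in `u` and `v`. -/
lemma exists_hasDerivAt_aeval_symm {n : ℕ} {S A : Matrix (Fin n) (Fin n) ℂ} (hS : S.IsSymm)
    (hSA : (S * A).IsSymm) (w : Fin n → ℂ) (p : ℂ[X]) :
    ∃ D : (Fin n → ℂ) → Matrix (Fin n) (Fin n) ℂ,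
      (∀ u, HasDerivAt (fun t : ℂ => aeval (A + t • vecMulVec w (S *ᵥ u)) p) (D u) 0) ∧
      ∀ u v, D u *ᵥ v = D v *ᵥ u := by
  induction p using Polynomial.induction_on' with
  | add p q hp hq =>
    obtain ⟨D, hD, hDs⟩ := hp
    obtain ⟨E, hE, hEs⟩ := hq
    refine ⟨fun u => D u + E u, fun u => ?_, fun u v => ?_⟩
    · simp only [map_add]
      exact (hD u).fun_add (hE u)
    · rw [add_mulVec, add_mulVec, hDs, hEs]
  | monomial k a =>
    refine ⟨fun u => a • ∑ i ∈ Finset.range k,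
      A ^ i * vecMulVec w (S *ᵥ u) * A ^ (k - 1 - i), fun u => ?_, fun u v => ?_⟩
    · simp only [aeval_monomial, Algebra.algebraMap_eq_smul_one, smul_mul_assoc, one_mul]
      exact (hasDerivAt_add_smul_pow A (vecMulVec w (S *ᵥ u)) k).fun_const_smul a
    · rw [smul_mulVec, smul_mulVec, sum_mulVec, sum_mulVec]
      exact congrArg (a • ·) (Finset.sum_congr rfl fun i _ =>
        pow_mul_vecMulVec_mul_pow_mulVec_comm hS hSA w i _ u v)

/-- If the complex polynomials `P m` are uniformly Cauchy on `K` and the sup norm on `K` controls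
`p ↦ p(a')` uniformly for `a'` near `a`, then `t ↦ P m (a + t b)` converges near `0`, together
with its derivative at `0`. -/
lemma exists_tendsto_aeval_and_deriv {𝔸 : Type*} [NormedRing 𝔸] [NormedAlgebra ℂ 𝔸]
    [CompleteSpace 𝔸] {K : Set ℂ} {P : ℕ → ℂ[X]}
    (hP : UniformCauchySeqOn (fun m z => (P m).eval z) atTop K) (a b : 𝔸) {c : ℝ}
    (hc : ∀ᶠ a' in 𝓝 a, ∀ (p : ℂ[X]) (M : ℝ), 0 ≤ M → (∀ z ∈ K, ‖p.eval z‖ ≤ M) →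
      ‖aeval a' p‖ ≤ c * M) (D : ℕ → 𝔸)
    (hD : ∀ m, HasDerivAt (fun t : ℂ => aeval (a + t • b) (P m)) (D m) 0) :
    ∃ (Φ : ℂ → 𝔸) (Φ' : 𝔸),
      (∀ᶠ t in 𝓝 (0 : ℂ), Tendsto (fun m => aeval (a + t • b) (P m)) atTop (𝓝 (Φ t))) ∧
      HasDerivAt Φ Φ' 0 ∧ Tendsto D atTop (𝓝 Φ') := by
  have hcurve : ContinuousAt (fun t : ℂ => a + t • b) 0 := by fun_prop
  have hev := hcurve.eventually (p := fun a' => ∀ (p : ℂ[X]) (M : ℝ), 0 ≤ M →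
    (∀ z ∈ K, ‖p.eval z‖ ≤ M) → ‖aeval a' p‖ ≤ c * M) (by simpa using hc)
  obtain ⟨r, hr, hball⟩ := Metric.eventually_nhds_iff_ball.mp hev
  have hcauchy : UniformCauchySeqOn (fun m (t : ℂ) => aeval (a + t • b) (P m)) atTop
      (Metric.ball 0 r) := by
    rw [Metric.uniformCauchySeqOn_iff] at hP ⊢
    intro ε hε
    obtain ⟨N, hN⟩ := hP (ε / (|c| + 1)) (by positivity)
    refine ⟨N, fun m hm k hk t ht => ?_⟩
    have h := hball t ht (P m - P k) (ε / (|c| + 1)) (by positivity) fun z hz => by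
      simpa [dist_eq_norm] using (hN m hm k hk z hz).le
    rw [dist_eq_norm, ← map_sub]
    refine h.trans_lt ?_
    rw [mul_div_assoc', div_lt_iff₀ (by positivity)]
    nlinarith [le_abs_self c]
  have hlim : ∀ t ∈ Metric.ball (0 : ℂ) r, ∃ y : 𝔸,
      Tendsto (fun m => aeval (a + t • b) (P m)) atTop (𝓝 y) :=
    fun t ht => cauchySeq_tendsto_of_complete (hcauchy.cauchySeq ht)
  choose! Φ hΦ using hlim
  have hunif := (hcauchy.tendstoUniformlyOn_of_tendsto hΦ).tendstoLocallyUniformlyOn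
  have hdiff : ∀ m, Differentiable ℂ fun t : ℂ => aeval (a + t • b) (P m) := by
    intro m
    simp only [aeval_eq_sum_range]
    fun_prop
  have hdiffOn : ∀ᶠ m in (atTop : Filter ℕ), DifferentiableOn ℂ
      (fun t : ℂ => aeval (a + t • b) (P m)) (Metric.ball 0 r) :=
    .of_forall fun m => (hdiff m).differentiableOn
  have h0 : (0 : ℂ) ∈ Metric.ball 0 r := Metric.mem_ball_self hr
  refine ⟨Φ, deriv Φ 0, ?_, ?_, ?_⟩
  · filter_upwards [Metric.ball_mem_nhds (0 : ℂ) hr] with t ht using hΦ t ht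
  · exact ((hunif.differentiableOn hdiffOn Metric.isOpen_ball).differentiableAt
      (Metric.ball_mem_nhds 0 hr)).hasDerivAt
  · have h := (hunif.deriv hdiffOn Metric.isOpen_ball).tendsto_at h0
    simpa only [Function.comp_def, (hD _).deriv] using h

/-- Openness of the spectral condition along the line `A + t B`. -/
lemma eventually_spectrum_add_smul_subset {n : ℕ} {V : Set ℂ} (hV : IsOpen V)
    (A B : Matrix (Fin n) (Fin n) ℂ) (hA : spectrum ℂ A ⊆ V) :
    ∀ᶠ t in 𝓝 (0 : ℂ), spectrum ℂ (A + t • B) ⊆ V := by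
  have hspec : ∀ᶠ A' in 𝓝 A, spectrum ℂ A' ⊆ V :=
    ((upperHemicontinuous_spectrum ℂ (Matrix (Fin n) (Fin n) ℂ)).upperHemicontinuousAt A V
      (hV.mem_nhdsSet.mpr hA)).mono fun _ h => subset_of_mem_nhdsSet h
  have hcurve : ContinuousAt (fun t : ℂ => A + t • B) 0 := by fun_prop
  exact hcurve.eventually (by simpa using hspec)

/-- The derivative of the operator function `F = lim p m` along a line is the limit of the
derivatives of the polynomials `p m`. -/
lemma tendsto_deriv_aeval_of_hasDerivAt {n : ℕ} {K : Set ℂ} {f : ℂ → ℂ} {p : ℕ → ℝ[X]}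
    (hp : TendstoUniformlyOn (fun m z => aeval z (p m)) f atTop K)
    {F : Matrix (Fin n) (Fin n) ℝ → Matrix (Fin n) (Fin n) ℝ}
    (hF : ∀ A : Matrix (Fin n) (Fin n) ℝ,
      spectrum ℂ (A.map (algebraMap ℝ ℂ)) ⊆ interior K →
      ∀ i j, Tendsto (fun m => aeval A (p m) i j) atTop (𝓝 (F A i j)))
    (A B : Matrix (Fin n) (Fin n) ℝ)
    (hA : spectrum ℂ (A.map (algebraMap ℝ ℂ)) ⊆ interior K)
    (D : ℕ → Matrix (Fin n) (Fin n) ℂ)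
    (hD : ∀ m, HasDerivAt (fun t : ℂ => aeval (A.map (algebraMap ℝ ℂ) +
      t • B.map (algebraMap ℝ ℂ)) ((p m).map (algebraMap ℝ ℂ))) (D m) 0)
    (A' : Matrix (Fin n) (Fin n) ℝ)
    (hA' : ∀ i j, HasDerivAt (fun t : ℝ => F (A + t • B) i j) (A' i j) 0) :
    Tendsto D atTop (𝓝 (A'.map (algebraMap ℝ ℂ))) := by
  have hP : UniformCauchySeqOn (fun m z => ((p m).map (algebraMap ℝ ℂ)).eval z) atTop K := by
    simpa only [eval_map_algebraMap] using hp.uniformCauchySeqOn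
  obtain ⟨c, hc⟩ := eventually_norm_aeval_le _ hA
  obtain ⟨Φ, Φ', hΦ, hΦ', hDΦ⟩ := exists_tendsto_aeval_and_deriv hP _ _ hc D hD
  suffices h : Φ' = A'.map (algebraMap ℝ ℂ) by rwa [← h]
  ext i j
  have hmap : ∀ t : ℝ, A.map (algebraMap ℝ ℂ) + (t : ℂ) • B.map (algebraMap ℝ ℂ) =
      (A + t • B).map (algebraMap ℝ ℂ) := by
    intro t; ext i j; simp
  have hpoly : ∀ (t : ℝ) (q : ℝ[X]),
      aeval ((A + t • B).map (algebraMap ℝ ℂ)) (q.map (algebraMap ℝ ℂ)) =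
        (aeval (A + t • B) q).map (algebraMap ℝ ℂ) := by
    intro t q
    rw [aeval_map_algebraMap]
    exact aeval_algHom_apply (Algebra.ofId ℝ ℂ).mapMatrix (A + t • B) q
  have hentry : Continuous fun M : Matrix (Fin n) (Fin n) ℂ => M i j := by fun_prop
  have hofReal : Tendsto (fun t : ℝ => (t : ℂ)) (𝓝 0) (𝓝 0) := by
    simpa using Complex.continuous_ofReal.tendsto 0
  have heq : (fun t : ℝ => Φ t i j) =ᶠ[𝓝 0] fun t : ℝ => ((F (A + t • B) i j : ℝ) : ℂ) := by
    filter_upwards [hofReal.eventually hΦ, hofReal.eventually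
      (eventually_spectrum_add_smul_subset isOpen_interior _ (B.map (algebraMap ℝ ℂ)) hA)]
      with t ht hspec
    rw [hmap] at ht hspec
    have h1 := (hentry.tendsto _).comp ht
    have h2 := (Complex.continuous_ofReal.tendsto _).comp (hF _ hspec i j)
    refine tendsto_nhds_unique h1 (h2.congr fun m => ?_)
    simp only [Function.comp_apply, hpoly]
    rfl
  have hΦij : HasDerivAt (fun t : ℂ => Φ t i j) (Φ' i j) 0 :=
    (LinearMap.toContinuousLinearMap (entryLinearMap ℂ ℂ i j)).hasFDerivAt.comp_hasDerivAt
      (0 : ℂ) hΦ'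
  have h1 : HasDerivAt (fun t : ℝ => Φ t i j) (Φ' i j) 0 :=
    HasDerivAt.comp_ofReal (z := 0) (by rwa [Complex.ofReal_zero])
  exact (h1.congr_of_eventuallyEq heq.symm).unique (hA' i j).ofReal_comp

end OperatorFunction

theorem stmt16 {n : ℕ} (U : Set (Fin n → ℝ)) (hU : IsOpen U)
    (g : (Fin n → ℝ) → Matrix (Fin n) (Fin n) ℝ) (hg : IsMetricOn g U)
    (L : (Fin n → ℝ) → Matrix (Fin n) (Fin n) ℝ)
    (hLsmooth : ∀ i j, ContDiffOn ℝ (⊤ : ℕ∞) (fun x => L x i j) U)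
    -- `L` is `g`-self-adjoint
    (hLsa : ∀ x ∈ U, (g x * L x)ᵀ = g x * L x)
    (K : Set ℂ) (f : ℂ → ℂ)
    (hadm : AdmissibleFun K f) (hspec : SpectrumIn L U K)
    -- `F` realises the operator function `A ↦ f(A)` on matrices whose spectrum
    -- lies in the interior of `K`, via a sequence of real polynomials converging
    -- to `f` uniformly on `K`
    (p : ℕ → Polynomial ℝ)
    (hp : TendstoUniformlyOn (fun m z => aeval z (p m)) f atTop K)
    (F : Matrix (Fin n) (Fin n) ℝ → Matrix (Fin n) (Fin n) ℝ)
    (hF : ∀ A : Matrix (Fin n) (Fin n) ℝ,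
      spectrum ℂ (A.map (algebraMap ℝ ℂ)) ⊆ interior K →
      ∀ i j, Tendsto (fun m => aeval A (p m) i j) atTop (nhds (F A i j)))
    -- the matrix of the operator `(u⊗l)^*`, i.e. `v ↦ g(u,v)·g⁻¹(l)`, `l = d tr L`
    (B : (Fin n → ℝ) → (Fin n → ℝ) → Matrix (Fin n) (Fin n) ℝ)
    (hB : ∀ x u, B x u = Matrix.of fun i j =>
      ((g x)⁻¹.mulVec (fun s => pd s (fun y => (L y).trace) x)) i * ((g x).mulVec u) j)
    -- `A*_u = (d/dt)|₀ f(L + t·(u⊗l)^*)`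
    (Astar : (Fin n → ℝ) → (Fin n → ℝ) → Matrix (Fin n) (Fin n) ℝ)
    (hAstar : ∀ x ∈ U, ∀ u : Fin n → ℝ, ∀ i j,
      HasDerivAt (fun t : ℝ => F (L x + t • B x u) i j) (Astar x u i j) 0) :
    -- then `A*_u v = A*_v u`
    ∀ x ∈ U, ∀ u v : Fin n → ℝ, (Astar x u).mulVec v = (Astar x v).mulVec u := by
  intro x hx u v
  set S := (g x).map (algebraMap ℝ ℂ) with hSdef
  set A := (L x).map (algebraMap ℝ ℂ) with hAdef
  set w : Fin n → ℂ := fun i =>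
    (((g x)⁻¹.mulVec (fun s => pd s (fun y => (L y).trace) x)) i : ℂ) with hw
  have hS : S.IsSymm := by
    rw [IsSymm, hSdef, ← transpose_map, hg.symm x hx]
  have hSA : (S * A).IsSymm := by
    rw [IsSymm, hSdef, hAdef, ← Matrix.map_mul, ← transpose_map, hLsa x hx]
  choose D hD hDs using fun m =>
    exists_hasDerivAt_aeval_symm hS hSA w ((p m).map (algebraMap ℝ ℂ))
  have hBmap : ∀ u : Fin n → ℝ, (B x u).map (algebraMap ℝ ℂ) =
      vecMulVec w (S *ᵥ fun i => (u i : ℂ)) := by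
    intro u
    ext i j
    simp [hB, hw, hSdef, vecMulVec_apply, mulVec, dotProduct]
  have hlim : ∀ u : Fin n → ℝ, Tendsto (fun m => D m fun i => (u i : ℂ)) atTop
      (nhds ((Astar x u).map (algebraMap ℝ ℂ))) := by
    intro u
    refine tendsto_deriv_aeval_of_hasDerivAt hp hF (L x) (B x u) (hspec x hx) _
      (fun m => ?_) _ (hAstar x hx u)
    rw [hBmap]
    exact hD m _
  have happly : ∀ u v : Fin n → ℝ, Tendsto (fun m => (D m fun i => (u i : ℂ)) *ᵥ
      fun i => (v i : ℂ)) atTop (nhds (fun i => ((Astar x u *ᵥ v) i : ℂ))) := by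
    intro u v
    have hc : Continuous fun M : Matrix (Fin n) (Fin n) ℂ => M *ᵥ fun i => (v i : ℂ) := by
      fun_prop
    have hval : (fun i => ((Astar x u *ᵥ v) i : ℂ)) =
        (Astar x u).map (algebraMap ℝ ℂ) *ᵥ fun i => (v i : ℂ) := by
      funext i
      simp [mulVec, dotProduct]
    rw [hval]
    exact (hc.tendsto _).comp (hlim u)
  have h := tendsto_nhds_unique (happly u v)
    ((happly v u).congr fun m => hDs m _ _)
  ext i
  exact_mod_cast congrFun h i
end
end
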